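/- Let c_n(β) denote the Taylor coefficients of the unique solution e_β of ∫_0^∞ e_β(sx)/e_β(x) dx = 1/(1−s) − β (normalized c_0(β) = 1). Then for every β ∈ (0,1) and every n ≥ 1, c_n(β) > 1/n!, and moreover c_n is strictly monotone: c_n(β) > c_n(γ) whenever 0 ≤ γ < β < 1. -/

import Mathlib

open MeasureTheory Real Set

/-!
Write `m(x) = x f'(x) / f(x)`. Expanding `f (s x)` in the balanced equation turns it into the moment
identities `c n * ∫₀^∞ x ^ n / f = 1` for `n ≥ 1`, with value `1 - β` for `n = 0`. Integrating by
parts, the average of `m` against `x ^ k / f` is `k + 1`, while the average of `x` is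
`c k / c (k + 1)` (for `k ≥ 1`), so linear inequalities between `x` and `m(x)` translate into
bounds on consecutive ratios (`linear_pos`), and conversely by summing series.

Jensen's inequality gives `s ^ m(x) ≤ f (s x) / f x ≤ s ^ m(s x)`, so
`λ ∫ exp (-λ m(x)) dx → 1` as `λ → 0⁺`, and Karamata's Tauberian argument yields `m(x) ~ x`. This
makes the suprema and infima of the consecutive ratios attained whenever they are on the wrong side
of `1`, and a maximum principle then gives `n c (n + 1) ≤ c n ≤ (n + 1) c (n + 1)` (`coeff_le`,
`le_coeff`). The right-hand inequality and the deficit `1 - β` at `n = 0` give `c n > 1 / n!`.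

For the comparison of `f` and `g` with parameters `β > γ`, the ratio set `{d n / c n}` is
controlled by a maximum principle (`coeff_lt`) once the quotient is known to drop below `1`
eventually, which follows from `g / f → 0` (`tendsto_div`). To see that, put `H(x) = log f(x) - x`.
The ratio bounds say that `H` and `log x - H(x)` are nondecreasing. The balanced equation
at `s = 1 - 1 / A` reads `A ∫ exp (-t) (1 - exp (-z)) dt = β` with `z = H(A t) - H((A - 1) t)`
lying in `[0, log (A / (A - 1))]`, so `J(A) = ∫ exp (-t) H(A t) dt` has increments
`J(A) - J(A - 1)` between `β / A` and `β / (A - 1)`. Summing the harmonic series, the difference of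
the two functions `J`, and hence `log (f / g)`, tends to infinity.
-/

/-! ### Power series and moments -/

/-- The hypotheses on one parameter value: `f` is the function with positive Taylor coefficients
`c`, `c 0 = 1`, solving the balanced equation for `β ∈ [0, 1)`. Convergence of the series and of the
integrals is not assumed; both follow from `balance` (`summable`, `integrable_ratio`), because a
divergent series or integral takes the junk value `0`. -/
structure BalancedEq (β : ℝ) (c : ℕ → ℝ) (f : ℝ → ℝ) : Prop where
  nonneg : 0 ≤ β
  lt_one : β < 1
  pos : ∀ n, 0 < c n
  zero : c 0 = 1
  eq_tsum : ∀ x, f x = ∑' n : ℕ, c n * x ^ n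
  balance : ∀ s ∈ Set.Ico (0:ℝ) 1, (∫ x in Set.Ioi (0:ℝ), f (s * x) / f x) = 1 / (1 - s) - β

/-- The coefficients of the formally differentiated power series. -/
def derivCoeff (c : ℕ → ℝ) (n : ℕ) : ℝ := (n + 1) * c (n + 1)

lemma summable_derivCoeff {c : ℕ → ℝ} (hc : ∀ n, 0 < c n)
    (hs : ∀ x : ℝ, 0 ≤ x → Summable fun n => c n * x ^ n) {x : ℝ} (hx : 0 ≤ x) :
    Summable fun n => derivCoeff c n * x ^ n := by
  have h1 : Summable fun n => c (n + 1) * (2 * (x + 1)) ^ (n + 1) :=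
    (summable_nat_add_iff 1).2 (hs (2 * (x + 1)) (by positivity))
  refine Summable.of_nonneg_of_le (fun n => ?_) (fun n => ?_) h1
  · have := (hc (n + 1)).le
    unfold derivCoeff; positivity
  · have h2 : ((n : ℝ) + 1) ≤ 2 ^ (n + 1) := by
      exact_mod_cast (Nat.lt_two_pow_self (n := n + 1)).le
    have h3 : x ^ n ≤ (x + 1) ^ (n + 1) :=
      (pow_le_pow_left₀ hx (by linarith) n).trans
        (pow_le_pow_right₀ (by linarith) (Nat.le_succ n))
    rw [mul_pow, derivCoeff]
    calc (n + 1) * c (n + 1) * x ^ n = c (n + 1) * ((n + 1) * x ^ n) := by ring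
      _ ≤ _ := by
        have := (hc (n + 1)).le
        gcongr

lemma hasDerivAt_series {c : ℕ → ℝ} (hc : ∀ n, 0 < c n)
    (hs : ∀ x : ℝ, 0 ≤ x → Summable fun n => c n * x ^ n) (x : ℝ) :
    HasDerivAt (fun y => ∑' n : ℕ, c n * y ^ n) (∑' n : ℕ, derivCoeff c n * x ^ n) x := by
  set R := |x| + 1 with hR
  have hR0 : 0 ≤ R := by positivity
  have hu : Summable fun n : ℕ => c n * (n * R ^ (n - 1)) := by
    refine (summable_nat_add_iff 1).1 ?_
    refine (summable_derivCoeff hc hs hR0).congr fun n => ?_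
    simp [derivCoeff]; ring
  have key := hasDerivAt_tsum_of_isPreconnected (t := Metric.ball (0:ℝ) R) (y₀ := 0) (y := x)
    (g := fun n y => c n * y ^ n) (g' := fun n y => c n * (n * y ^ (n - 1))) hu Metric.isOpen_ball
    (convex_ball _ _).isPreconnected
    (fun n y _ => (hasDerivAt_pow n y).const_mul (c n))
    (fun n y hy => by
      have hy' : |y| ≤ R := by simpa using (Metric.mem_ball.1 hy).le
      rw [norm_mul, norm_mul, norm_pow, Real.norm_of_nonneg (hc n).le, Real.norm_eq_abs,
        Real.norm_eq_abs, Nat.abs_cast]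
      have := (hc n).le
      gcongr)
    (by simp [hR]; positivity) (hs 0 le_rfl) (by simp [hR])
  have h2 : Summable fun n : ℕ => c n * (n * x ^ (n - 1)) := by
    refine Summable.of_norm_bounded hu fun n => ?_
    rw [norm_mul, norm_mul, norm_pow, Real.norm_of_nonneg (hc n).le, Real.norm_eq_abs,
        Real.norm_eq_abs, Nat.abs_cast]
    have := (hc n).le
    have : |x| ≤ R := by simp [hR]
    gcongr
  rw [h2.tsum_eq_zero_add] at key
  simp only [CharP.cast_eq_zero, zero_mul, mul_zero, zero_add] at key
  have h3 : ∑' n : ℕ, derivCoeff c n * x ^ n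
      = ∑' n : ℕ, c (n + 1) * ((n + 1 : ℕ) * x ^ (n + 1 - 1)) :=
    tsum_congr fun n => by simp [derivCoeff]; ring
  rwa [h3]

/-- A power series vanishing on `(0, 1)` has vanishing coefficients. -/
lemma coeff_eq_zero {d : ℕ → ℝ} (hd : ∀ s ∈ Ioo (0:ℝ) 1, HasSum (fun n => d n * s ^ n) 0) (n : ℕ) :
    d n = 0 := by
  have first : ∀ d : ℕ → ℝ, (∀ s ∈ Ioo (0:ℝ) 1, HasSum (fun n => d n * s ^ n) 0) → d 0 = 0 := by
    intro d hd
    have hhalf : Summable fun n => |d (n + 1)| * (1 / 2) ^ n := by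
      have h1 := ((summable_nat_add_iff 1).2
        (hd (1 / 2) (by constructor <;> norm_num)).summable).abs.mul_left 2
      refine h1.congr fun n => ?_
      rw [abs_mul, abs_pow, abs_of_pos (by norm_num : (0:ℝ) < 1 / 2), pow_succ]; ring
    set C := ∑' n, |d (n + 1)| * (1 / 2) ^ n with hC
    have hb : ∀ s ∈ Ioo (0:ℝ) (1 / 2), |d 0| ≤ s * C := by
      intro s hs
      have h1 := hd s ⟨hs.1, by linarith [hs.2]⟩
      have h2 : HasSum (fun n => d (n + 1) * s ^ (n + 1)) (-d 0) := by
        have := (hasSum_nat_add_iff' 1).2 h1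
        simpa using this
      have h3 := (hhalf.hasSum.mul_left s)
      have h4 := hasSum_le (fun n => ?_) h2 h3
      have h5 := hasSum_le (fun n => ?_) h2.neg h3
      · exact abs_le.2 ⟨by linarith, by linarith⟩
      all_goals
        have h6 : |d (n + 1) * s ^ (n + 1)| ≤ s * (|d (n + 1)| * (1 / 2) ^ n) := by
          rw [abs_mul, abs_pow, abs_of_pos hs.1, pow_succ]
          have : s ^ n ≤ (1 / 2) ^ n := pow_le_pow_left₀ hs.1.le hs.2.le n
          calc |d (n + 1)| * (s ^ n * s) = s * (|d (n + 1)| * s ^ n) := by ring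
            _ ≤ _ := by have := hs.1.le; gcongr
      · exact (neg_le_abs _).trans h6
      · exact (le_abs_self _).trans h6
    have hC0 : 0 ≤ C := tsum_nonneg fun n => by positivity
    by_contra hne
    have hpos := abs_pos.2 hne
    have h1 := hb (min (1 / 4) (|d 0| / (2 * (C + 1)))) ⟨by positivity, by
      exact (min_le_left _ _).trans_lt (by norm_num)⟩
    have h2 : min (1 / 4) (|d 0| / (2 * (C + 1))) * C ≤ |d 0| / (2 * (C + 1)) * (C + 1) := by
      gcongr
      · exact min_le_right _ _
      · linarith
    have h3 : |d 0| / (2 * (C + 1)) * (C + 1) = |d 0| / 2 := by field_simp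
    linarith
  induction n generalizing d with
  | zero => exact first d hd
  | succ n ih =>
    refine ih (d := fun n => d (n + 1)) fun s hs => ?_
    have h1 := (hasSum_nat_add_iff' 1).2 (hd s hs)
    simp only [Finset.range_one, Finset.sum_singleton, first d hd, zero_mul, sub_zero] at h1
    have h2 := h1.div_const s
    rw [zero_div] at h2
    refine h2.congr_fun fun n => ?_
    have := hs.1.ne'
    rw [pow_succ]; field_simp

namespace BalancedEq
variable {β : ℝ} {c : ℕ → ℝ} {f : ℝ → ℝ}

/-- If the series diverged at `x`, then `f` would be the junk value `0` beyond `x`, so the integral in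
the balanced equation would stay at most `x` as `s → 1`. -/
lemma summable (h : BalancedEq β c f) {x : ℝ} (hx : 0 ≤ x) : Summable fun n => c n * x ^ n := by
  by_contra hns
  have mono : ∀ y z : ℝ, 0 ≤ y → y ≤ z → (Summable fun n => c n * z ^ n) →
      Summable fun n => c n * y ^ n := fun y z hy hyz hz =>
    Summable.of_nonneg_of_le (fun n => by have := (h.pos n).le; positivity)
      (fun n => by have := (h.pos n).le; gcongr) hz
  have key : ∀ s ∈ Set.Ico (0:ℝ) 1, 1 / (1 - s) - β ≤ x := by
    intro s hs
    rw [← h.balance s hs]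
    have hle : ∀ y ∈ Ioi (0:ℝ), 0 ≤ f (s * y) / f y ∧
        f (s * y) / f y ≤ (Ioc 0 x).indicator (fun _ => (1:ℝ)) y := by
      intro y hy
      have hy0 : 0 < y := hy
      by_cases hsy : Summable fun n => c n * y ^ n
      · have hyx : y ≤ x := by
          by_contra hlt
          exact hns (mono x y hx (not_le.1 hlt).le hsy)
        rw [indicator_of_mem (show y ∈ Ioc 0 x from ⟨hy, hyx⟩), h.eq_tsum, h.eq_tsum]
        have h0 : 0 ≤ ∑' n, c n * (s * y) ^ n := tsum_nonneg fun n => by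
          have := (h.pos n).le
          have := hs.1
          positivity
        have h1 : 0 ≤ ∑' n, c n * y ^ n := tsum_nonneg fun n => by
          have := (h.pos n).le
          positivity
        have hsy' : s * y ≤ y := by nlinarith [hs.2]
        have h2 : ∑' n, c n * (s * y) ^ n ≤ ∑' n, c n * y ^ n :=
          Summable.tsum_le_tsum (fun n => by
            have := (h.pos n).le
            have := mul_nonneg hs.1 hy0.le
            gcongr)
            (mono _ y (mul_nonneg hs.1 hy0.le) hsy' hsy) hsy
        exact ⟨div_nonneg h0 h1, div_le_one_of_le₀ h2 h1⟩
      · rw [h.eq_tsum y, tsum_eq_zero_of_not_summable hsy]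
        simp only [div_zero, le_refl, true_and]
        exact indicator_nonneg (fun _ _ => zero_le_one) _
    have hint : Integrable ((Ioc 0 x).indicator (fun _ => (1:ℝ))) (volume.restrict (Ioi 0)) :=
      ((integrable_indicator_iff measurableSet_Ioc).2
        (integrableOn_const (by simp))).restrict
    refine (integral_mono_of_nonneg ?_ hint ?_).trans ?_
    · exact (ae_restrict_mem measurableSet_Ioi).mono fun y hy => (hle y hy).1
    · exact (ae_restrict_mem measurableSet_Ioi).mono fun y hy => (hle y hy).2
    · rw [integral_indicator measurableSet_Ioc, Measure.restrict_restrict measurableSet_Ioc,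
        inter_eq_left.2 (fun y hy => hy.1)]
      simp [hx]
  -- the blow-up of `1 / (1 - s)` as `s → 1` is incompatible with this bound
  have h2 := key (1 - 1 / (x + 2)) ⟨by
    rw [sub_nonneg, div_le_one (by linarith)]; linarith, by
    have : 0 < 1 / (x + 2) := by positivity
    linarith⟩
  have : (1:ℝ) / (1 - (1 - 1 / (x + 2))) = x + 2 := by simp
  rw [this] at h2
  linarith [h.lt_one]

lemma f_eq (h : BalancedEq β c f) : f = fun y => ∑' n : ℕ, c n * y ^ n := funext h.eq_tsum

lemma hasSum (h : BalancedEq β c f) {x : ℝ} (hx : 0 ≤ x) : HasSum (fun n => c n * x ^ n) (f x) := by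
  rw [h.eq_tsum]; exact (h.summable hx).hasSum

lemma term_le (h : BalancedEq β c f) {x : ℝ} (hx : 0 ≤ x) (n : ℕ) : c n * x ^ n ≤ f x :=
  le_hasSum (h.hasSum hx) n fun k _ => by have := (h.pos k).le; positivity

lemma one_le (h : BalancedEq β c f) {x : ℝ} (hx : 0 ≤ x) : 1 ≤ f x := by
  simpa [h.zero] using h.term_le hx 0

lemma f_pos (h : BalancedEq β c f) {x : ℝ} (hx : 0 ≤ x) : 0 < f x :=
  one_pos.trans_le (h.one_le hx)

lemma hasDerivAt (h : BalancedEq β c f) (x : ℝ) :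
    HasDerivAt f (∑' n : ℕ, derivCoeff c n * x ^ n) x := by
  have := hasDerivAt_series h.pos (fun x hx => h.summable hx) x
  rwa [← h.f_eq] at this

lemma continuous (h : BalancedEq β c f) : Continuous f :=
  continuous_iff_continuousAt.2 fun x => (h.hasDerivAt x).continuousAt

lemma hasSum_deriv (h : BalancedEq β c f) {x : ℝ} (hx : 0 ≤ x) :
    HasSum (fun n => derivCoeff c n * x ^ n) (deriv f x) := by
  rw [(h.hasDerivAt x).deriv]
  exact (summable_derivCoeff h.pos (fun x hx => h.summable hx) hx).hasSum

lemma derivCoeff_pos (h : BalancedEq β c f) (n : ℕ) : 0 < derivCoeff c n := by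
  have := h.pos (n + 1)
  unfold derivCoeff; positivity

lemma deriv_nonneg (h : BalancedEq β c f) {x : ℝ} (hx : 0 ≤ x) : 0 ≤ deriv f x :=
  (h.hasSum_deriv hx).nonneg fun n => by have := (h.derivCoeff_pos n).le; positivity

lemma continuous_deriv (h : BalancedEq β c f) : Continuous (deriv f) := by
  have h1 : deriv f = fun y => ∑' n : ℕ, derivCoeff c n * y ^ n :=
    funext fun x => (h.hasDerivAt x).deriv
  rw [h1]
  exact continuous_iff_continuousAt.2 fun x =>
    (hasDerivAt_series h.derivCoeff_pos
      (fun x hx => summable_derivCoeff h.pos (fun x hx => h.summable hx) hx) x).continuousAt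

/-- `∑ n c_n xⁿ = x f'(x)`. -/
lemma hasSum_mul (h : BalancedEq β c f) {x : ℝ} (hx : 0 ≤ x) :
    HasSum (fun n : ℕ => (n : ℝ) * (c n * x ^ n)) (x * deriv f x) := by
  rw [← hasSum_nat_add_iff' 1]
  simp only [Finset.range_one, Finset.sum_singleton, Nat.cast_zero, zero_mul, sub_zero]
  refine ((h.hasSum_deriv hx).mul_left x).congr_fun fun n => ?_
  simp only [derivCoeff]; push_cast; ring

/-- Otherwise the integral would be the junk value `0`, while `1 / (1 - s) - β > 0`. -/
lemma integrable_ratio (h : BalancedEq β c f) {s : ℝ} (hs : s ∈ Ico (0:ℝ) 1) :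
    IntegrableOn (fun x => f (s * x) / f x) (Ioi 0) := by
  by_contra hni
  have h1 := h.balance s hs
  rw [integral_undef hni] at h1
  have h2 : 1 ≤ 1 / (1 - s) := by
    rw [le_div_iff₀ (by linarith [hs.2])]; linarith [hs.1]
  linarith [h.lt_one]

lemma integrable_moment (h : BalancedEq β c f) (n : ℕ) :
    IntegrableOn (fun x => x ^ n / f x) (Ioi 0) := by
  have h1 := (h.integrable_ratio (s := 1 / 2) (by constructor <;> norm_num)).const_mul
    (2 ^ n / c n)
  refine Integrable.mono' h1 (Measurable.aestronglyMeasurable ?_) ?_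
  · exact (measurable_id.pow_const n).div h.continuous.measurable
  · refine (ae_restrict_mem measurableSet_Ioi).mono fun x hx => ?_
    have hx0 : (0:ℝ) < x := hx
    have hf := h.f_pos hx0.le
    rw [Real.norm_of_nonneg (by positivity), ← mul_div_assoc]
    gcongr
    have := h.term_le (x := 1 / 2 * x) (by positivity) n
    have hc := h.pos n
    rw [div_mul_eq_mul_div, le_div_iff₀ hc]
    calc x ^ n * c n = 2 ^ n * (c n * (1 / 2 * x) ^ n) := by
          rw [mul_pow, div_pow, one_pow]; field_simp
      _ ≤ _ := by gcongr

/-- The balanced equation in moment form, `c n * ∫ x ^ n / f x = 1` for `n ≥ 1` and `1 - β` for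
`n = 0`: integrate `f (s x) / f x` termwise and compare the coefficients of `s ^ n`. -/
lemma moment (h : BalancedEq β c f) (n : ℕ) :
    c n * ∫ x in Ioi (0:ℝ), x ^ n / f x = if n = 0 then 1 - β else 1 := by
  set w : ℕ → ℝ := fun n => c n * ∫ x in Ioi (0:ℝ), x ^ n / f x with hw
  have hw0 : ∀ n, 0 ≤ w n := fun n => mul_nonneg (h.pos n).le
    (setIntegral_nonneg measurableSet_Ioi fun x hx => by
      have hx0 : (0:ℝ) < x := hx
      have := h.f_pos hx0.le
      positivity)
  -- termwise integration of `f (s x) / f x`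
  have hsum : ∀ s ∈ Ioo (0:ℝ) 1, HasSum (fun n => w n * s ^ n) (1 / (1 - s) - β) := by
    intro s hs
    have hs' : s ∈ Ico (0:ℝ) 1 := ⟨hs.1.le, hs.2⟩
    set F : ℕ → ℝ → ℝ := fun n x => c n * s ^ n * (x ^ n / f x) with hF
    have hFi : ∀ n, Integrable (F n) (volume.restrict (Ioi 0)) := fun n =>
      (h.integrable_moment n).const_mul _
    have hFint : ∀ n, ∫ x in Ioi (0:ℝ), F n x = w n * s ^ n := fun n => by
      rw [hF, integral_const_mul]; simp only [hw]; ring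
    have hF0 : ∀ n, ∀ x ∈ Ioi (0:ℝ), 0 ≤ F n x := fun n x hx => by
      have hx0 : (0:ℝ) < x := hx
      have := h.f_pos hx0.le
      have := (h.pos n).le
      have := hs.1
      simp only [hF]; positivity
    have hFs : ∀ x ∈ Ioi (0:ℝ), HasSum (fun n => F n x) (f (s * x) / f x) := fun x hx => by
      have hx0 : (0:ℝ) < x := hx
      have h1 := (h.hasSum (x := s * x) (mul_nonneg hs.1.le hx0.le)).div_const (f x)
      refine h1.congr_fun fun n => ?_
      simp only [hF]; rw [mul_pow]; ring
    have hnorm : ∀ n, ∫ x in Ioi (0:ℝ), ‖F n x‖ = w n * s ^ n := fun n => by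
      rw [← hFint]
      exact setIntegral_congr_fun measurableSet_Ioi fun x hx => Real.norm_of_nonneg (hF0 n x hx)
    have hsm : Summable fun n => ∫ x in Ioi (0:ℝ), ‖F n x‖ := by
      simp only [hnorm]
      refine summable_of_sum_le (fun n => mul_nonneg (hw0 n) (pow_nonneg hs.1.le n))
        (c := 1 / (1 - s) - β) fun u => ?_
      rw [← h.balance s hs', ← Finset.sum_congr rfl fun n _ => hFint n,
        ← integral_finsetSum _ fun n _ => hFi n]
      refine setIntegral_mono_on (integrable_finsetSum _ fun n _ => hFi n)
        (h.integrable_ratio hs') measurableSet_Ioi fun x hx => ?_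
      exact sum_le_hasSum u (fun n _ => hF0 n x hx) (hFs x hx)
    have := hasSum_integral_of_summable_integral_norm hFi hsm
    rw [← h.balance s hs']
    rw [setIntegral_congr_fun measurableSet_Ioi fun x hx => (hFs x hx).tsum_eq.symm]
    simpa only [hFint] using this
  have hgeo : ∀ s ∈ Ioo (0:ℝ) 1,
      HasSum (fun n : ℕ => (if n = 0 then 1 - β else 1) * s ^ n) (1 / (1 - s) - β) := by
    intro s hs
    have h1 := (hasSum_geometric_of_lt_one hs.1.le hs.2).sub
      (hasSum_ite_eq (0:ℕ) β)
    rw [one_div]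
    refine h1.congr_fun fun n => ?_
    split_ifs with hn
    · simp [hn]
    · simp
  have := coeff_eq_zero (d := fun n => w n - if n = 0 then 1 - β else 1) (fun s hs => by
    have := (hsum s hs).sub (hgeo s hs)
    rw [sub_self] at this
    refine this.congr_fun fun n => ?_
    rw [sub_mul]) n
  linarith
end BalancedEq

/-! ### The mean index -/

/-- `m(x) = x f'(x) / f(x)`, the mean of the distribution on `ℕ` with weights proportional to
`c n * x ^ n`. -/
noncomputable def meanIndex (f : ℝ → ℝ) (x : ℝ) : ℝ := x * deriv f x / f x

lemma setIntegral_Ioi_pos {G : ℝ → ℝ} (hG : IntegrableOn G (Ioi 0)) (hpos : ∀ x, 0 < x → 0 < G x) :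
    0 < ∫ x in Ioi (0:ℝ), G x := by
  rw [setIntegral_pos_iff_support_of_nonneg_ae _ hG]
  · have : Function.support G ∩ Ioi 0 = Ioi 0 :=
      inter_eq_right.2 fun x hx => (hpos x hx).ne'
    rw [this]; simp
  · exact (ae_restrict_mem measurableSet_Ioi).mono fun x hx => (hpos x hx).le

namespace BalancedEq
variable {β : ℝ} {c : ℕ → ℝ} {f : ℝ → ℝ}

lemma meanIndex_nonneg (h : BalancedEq β c f) {x : ℝ} (hx : 0 ≤ x) : 0 ≤ meanIndex f x :=
  div_nonneg (mul_nonneg hx (h.deriv_nonneg hx)) (h.f_pos hx).le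

lemma continuousOn_meanIndex (h : BalancedEq β c f) : ContinuousOn (meanIndex f) (Ici 0) :=
  (continuous_id.mul h.continuous_deriv).continuousOn.div h.continuous.continuousOn
    fun _ hx => (h.f_pos hx).ne'

open Filter Topology in
lemma tendsto_pow_div (h : BalancedEq β c f) (k : ℕ) :
    Tendsto (fun x => x ^ k / f x) atTop (𝓝 0) := by
  have h1 : Tendsto (fun x : ℝ => (c (k + 1))⁻¹ * x⁻¹) atTop (𝓝 0) := by
    simpa using tendsto_inv_atTop_zero.const_mul (c (k + 1))⁻¹
  refine squeeze_zero' ?_ ?_ h1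
  · filter_upwards [eventually_gt_atTop 0] with x hx
    have := h.f_pos hx.le
    positivity
  · filter_upwards [eventually_gt_atTop 0] with x hx
    have h2 := h.term_le hx.le (k + 1)
    have := h.pos (k + 1)
    rw [div_le_iff₀ (h.f_pos hx.le)]
    calc x ^ k = (c (k + 1))⁻¹ * x⁻¹ * (c (k + 1) * x ^ (k + 1)) := by
          rw [pow_succ]; field_simp
      _ ≤ _ := by gcongr

open Filter Topology in
/-- Integration by parts: `(k + 1) ∫₀ˣ t ^ k / f - x ^ (k + 1) / f x` is a primitive of
`x ^ k / f x * m(x)`, and its boundary terms vanish. -/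
lemma moment_meanIndex (h : BalancedEq β c f) (k : ℕ) :
    IntegrableOn (fun x => x ^ k / f x * meanIndex f x) (Ioi 0) ∧
    ∫ x in Ioi (0:ℝ), x ^ k / f x * meanIndex f x
      = (k + 1) * ∫ x in Ioi (0:ℝ), x ^ k / f x := by
  set G : ℝ → ℝ := fun x => (k + 1) * (∫ t in (0:ℝ)..x, t ^ k / f t) - x ^ (k + 1) / f x with hG
  have hcont : ContinuousOn (fun t => t ^ k / f t) (Ici 0) :=
    (continuous_pow k).continuousOn.div h.continuous.continuousOn fun x hx => (h.f_pos hx).ne'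
  have hder : ∀ x ∈ Ici (0:ℝ), HasDerivAt G (x ^ k / f x * meanIndex f x) x := by
    intro x hx
    have hf := (h.f_pos hx).ne'
    have h1 : HasDerivAt (fun x => ∫ t in (0:ℝ)..x, t ^ k / f t) (x ^ k / f x) x := by
      refine intervalIntegral.integral_hasDerivAt_right ?_ ?_ ?_
      · refine ContinuousOn.intervalIntegrable (hcont.mono ?_)
        rw [uIcc_of_le hx]; exact fun y hy => hy.1
      · exact ((continuous_pow k).measurable.div
          h.continuous.measurable).stronglyMeasurable.stronglyMeasurableAtFilter
      · exact (continuous_pow k).continuousAt.div h.continuous.continuousAt hf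
    have h2 : HasDerivAt f (deriv f x) x := (h.hasDerivAt x).differentiableAt.hasDerivAt
    have h3 := (h1.const_mul ((k:ℝ) + 1)).sub ((hasDerivAt_pow (k + 1) x).div h2 hf)
    refine h3.congr_deriv ?_
    simp only [meanIndex]
    push_cast
    field_simp
    ring
  have hnn : ∀ x ∈ Ioi (0:ℝ), 0 ≤ x ^ k / f x * meanIndex f x := fun x hx => by
    have hx0 : (0:ℝ) < x := hx
    have := h.f_pos hx0.le
    have := h.meanIndex_nonneg hx0.le
    positivity
  have hlim : Tendsto G atTop (𝓝 ((k + 1) * ∫ x in Ioi (0:ℝ), x ^ k / f x)) := by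
    have h1 := (intervalIntegral_tendsto_integral_Ioi 0 (h.integrable_moment k)
      tendsto_id).const_mul ((k:ℝ) + 1)
    simpa using h1.sub (h.tendsto_pow_div (k + 1))
  refine ⟨integrableOn_Ioi_deriv_of_nonneg' hder hnn hlim, ?_⟩
  rw [integral_Ioi_of_hasDerivAt_of_nonneg' hder hnn hlim]
  simp [hG]

/-- Integrating `p x + q m(x) + r` against the weight `c k * x ^ k / f x` (a probability density
when `k ≥ 1`). -/
lemma integral_linear (h : BalancedEq β c f) (k : ℕ) (p q r : ℝ) :
    IntegrableOn (fun x => x ^ k / f x * (p * x + q * meanIndex f x + r)) (Ioi 0) ∧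
    c k * ∫ x in Ioi (0:ℝ), x ^ k / f x * (p * x + q * meanIndex f x + r)
      = p * (c k / c (k + 1)) + (q * (k + 1) + r) * if k = 0 then 1 - β else 1 := by
  have e : (fun x => x ^ k / f x * (p * x + q * meanIndex f x + r)) = fun x =>
      p * (x ^ (k + 1) / f x) + q * (x ^ k / f x * meanIndex f x) + r * (x ^ k / f x) := by
    funext x; ring
  have i1 := (h.integrable_moment (k + 1)).const_mul p
  have i2 := (h.moment_meanIndex k).1.const_mul q
  have i3 := (h.integrable_moment k).const_mul r
  have i12 : IntegrableOn (fun x => p * (x ^ (k + 1) / f x) +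
      q * (x ^ k / f x * meanIndex f x)) (Ioi 0) := i1.add i2
  rw [e]
  refine ⟨i12.add i3, ?_⟩
  rw [integral_add i12 i3, integral_add i1 i2, integral_const_mul, integral_const_mul,
    integral_const_mul, (h.moment_meanIndex k).2, ← h.moment k]
  have h1 := h.moment (k + 1)
  have h2 := h.pos (k + 1)
  simp only [Nat.add_eq_zero_iff, one_ne_zero, and_false, if_false] at h1
  have h3 : ∫ x in Ioi (0:ℝ), x ^ (k + 1) / f x = 1 / c (k + 1) := by
    field_simp; linarith
  rw [h3]; ring

/-- A pointwise linear inequality between `x` and the mean index becomes a bound on the ratio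
`c k / c (k + 1)`. -/
lemma linear_pos (h : BalancedEq β c f) (k : ℕ) {p q r : ℝ}
    (hp : ∀ x, 0 < x → 0 < p * x + q * meanIndex f x + r) :
    0 < p * (c k / c (k + 1)) + (q * (k + 1) + r) * if k = 0 then 1 - β else 1 := by
  rw [← (h.integral_linear k p q r).2]
  refine mul_pos (h.pos k) (setIntegral_Ioi_pos (h.integral_linear k p q r).1 fun x hx => ?_)
  exact mul_pos (div_pos (pow_pos hx k) (h.f_pos hx.le)) (hp x hx)

/-- Jensen's inequality for the convex function `n ↦ t ^ n` and the distribution on `ℕ` with weights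
proportional to `c n * x ^ n`. -/
lemma jensen (h : BalancedEq β c f) {x t : ℝ} (hx : 0 < x) (ht : 0 < t) :
    f x * t ^ meanIndex f x ≤ f (t * x) := by
  set m := meanIndex f x with hm
  have h1 : HasSum (fun n : ℕ => t ^ m * (c n * x ^ n) +
      t ^ m * Real.log t * ((n : ℝ) * (c n * x ^ n) - m * (c n * x ^ n)))
      (t ^ m * f x + t ^ m * Real.log t * (x * deriv f x - m * f x)) :=
    ((h.hasSum hx.le).mul_left _).add
      (((h.hasSum_mul hx.le).sub ((h.hasSum hx.le).mul_left m)).mul_left _)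
  have h0 : x * deriv f x - m * f x = 0 := by
    rw [hm, meanIndex, div_mul_cancel₀ _ (h.f_pos hx.le).ne', sub_self]
  rw [h0, mul_zero, add_zero, mul_comm _ (f x)] at h1
  refine hasSum_le (fun n => ?_) h1 (h.hasSum (mul_pos ht hx).le)
  have h2 : t ^ m * (1 + Real.log t * (n - m)) ≤ t ^ n := by
    have : t ^ n = t ^ m * Real.exp (Real.log t * (n - m)) := by
      rw [← Real.rpow_natCast, Real.rpow_def_of_pos ht, Real.rpow_def_of_pos ht, ← Real.exp_add]
      congr 1; ring
    rw [this]
    have h3 := Real.add_one_le_exp (Real.log t * (n - m))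
    have := Real.rpow_pos_of_pos ht m
    gcongr; linarith
  have := h.pos n
  calc _ = c n * x ^ n * (t ^ m * (1 + Real.log t * (n - m))) := by ring
    _ ≤ c n * x ^ n * t ^ n := by gcongr
    _ = _ := by rw [mul_pow]; ring

/-- Jensen's inequality at `x` towards `y` and at `y` towards `x` gives
`(y / x) ^ m(x) ≤ f y / f x ≤ (y / x) ^ m(y)`. -/
lemma meanIndex_mono (h : BalancedEq β c f) {x y : ℝ} (hx : 0 < x) (hxy : x ≤ y) :
    meanIndex f x ≤ meanIndex f y := by
  rcases hxy.eq_or_lt with rfl | hlt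
  · exact le_rfl
  have hy := hx.trans hlt
  have ht : 1 < y / x := (one_lt_div hx).2 hlt
  have h1 := h.jensen hx (t := y / x) (by positivity)
  have h2 := h.jensen hy (t := (y / x)⁻¹) (by positivity)
  rw [div_mul_cancel₀ _ hx.ne'] at h1
  rw [inv_div, div_mul_cancel₀ _ hy.ne', ← inv_div, Real.inv_rpow (by positivity)] at h2
  have hp := Real.rpow_pos_of_pos (show 0 < y / x by positivity) (meanIndex f y)
  rw [mul_inv_le_iff₀ hp] at h2
  exact (Real.rpow_le_rpow_left_iff ht).1 (le_of_mul_le_mul_left (h1.trans h2) (h.f_pos hx.le))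

/-- Two-sided bound for the Laplace transform of the mean index: Jensen's inequality at `x` and at
`s x` gives `s ^ m(x) ≤ f (s x) / f x ≤ s ^ m(s x)`. -/
lemma laplace (h : BalancedEq β c f) {s : ℝ} (hs : s ∈ Ioo (0:ℝ) 1) :
    IntegrableOn (fun x => s ^ meanIndex f x) (Ioi 0) ∧
    ∫ x in Ioi (0:ℝ), s ^ meanIndex f x ≤ 1 / (1 - s) - β ∧
    s * (1 / (1 - s) - β) ≤ ∫ x in Ioi (0:ℝ), s ^ meanIndex f x := by
  have hs' : s ∈ Ico (0:ℝ) 1 := ⟨hs.1.le, hs.2⟩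
  have hle : ∀ x ∈ Ioi (0:ℝ), s ^ meanIndex f x ≤ f (s * x) / f x := fun x hx => by
    rw [le_div_iff₀ (h.f_pos (le_of_lt hx)), mul_comm]
    exact h.jensen hx hs.1
  have hge : ∀ x ∈ Ioi (0:ℝ), f (s * x) / f x ≤ s ^ meanIndex f (s * x) := fun x hx => by
    have hx0 : (0:ℝ) < x := hx
    have hsx := mul_pos hs.1 hx0
    have h1 := h.jensen hsx (t := s⁻¹) (inv_pos.2 hs.1)
    rw [inv_mul_cancel_left₀ hs.1.ne', Real.inv_rpow hs.1.le] at h1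
    rw [div_le_iff₀ (h.f_pos hx0.le)]
    have hp := Real.rpow_pos_of_pos hs.1 (meanIndex f (s * x))
    rwa [mul_inv_le_iff₀ hp, mul_comm (f x)] at h1
  have hint : IntegrableOn (fun x => s ^ meanIndex f x) (Ioi 0) := by
    refine Integrable.mono' (h.integrable_ratio hs') ?_ ?_
    · refine ContinuousOn.aestronglyMeasurable ?_ measurableSet_Ioi
      exact ContinuousOn.rpow continuousOn_const
        (h.continuousOn_meanIndex.mono Ioi_subset_Ici_self) fun x _ => Or.inl hs.1.ne'
    · refine (ae_restrict_mem measurableSet_Ioi).mono fun x hx => ?_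
      rw [Real.norm_of_nonneg (Real.rpow_pos_of_pos hs.1 _).le]
      exact hle x hx
  refine ⟨hint, ?_, ?_⟩
  · rw [← h.balance s hs']
    exact setIntegral_mono_on hint (h.integrable_ratio hs') measurableSet_Ioi hle
  · have hint2 : IntegrableOn (fun x => s ^ meanIndex f (s * x)) (Ioi 0) := by
      have := (integrableOn_Ioi_comp_mul_left_iff (fun x => s ^ meanIndex f x) 0 hs.1).2
        (by simpa using hint)
      exact this
    have h1 := setIntegral_mono_on (h.integrable_ratio hs') hint2 measurableSet_Ioi hge
    rw [h.balance s hs', integral_comp_mul_left_Ioi (fun x => s ^ meanIndex f x) 0 hs.1,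
      mul_zero, smul_eq_mul] at h1
    rwa [← le_inv_mul_iff₀ hs.1]
end BalancedEq

/-! ### A Tauberian theorem for the mean index -/

open Filter Topology in
/-- The input of the Tauberian argument: a nonnegative, nondecreasing, continuous function on
`(0, ∞)` whose Laplace-type transform satisfies `λ ∫ exp (-λ m(x)) dx → 1` as `λ → 0⁺`. -/
structure TauberianData (m : ℝ → ℝ) : Prop where
  nonneg : ∀ x, 0 < x → 0 ≤ m x
  mono : ∀ x y, 0 < x → x ≤ y → m x ≤ m y
  cont : ContinuousOn m (Ioi 0)
  integrable : ∀ l, 0 < l → IntegrableOn (fun x => exp (-l * m x)) (Ioi 0)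
  lim : Tendsto (fun l => l * ∫ x in Ioi (0:ℝ), exp (-l * m x)) (𝓝[>] 0) (𝓝 1)

/-- Karamata's functional `λ ∫ u φ(u) dx` with `u = exp (-λ m(x))`. -/
noncomputable def laplaceTest (m φ : ℝ → ℝ) (l : ℝ) : ℝ :=
  l * ∫ x in Ioi (0:ℝ), exp (-l * m x) * φ (exp (-l * m x))

namespace TauberianData
open Filter Topology
variable {m : ℝ → ℝ}

lemma exp_mem (h : TauberianData m) {l x : ℝ} (hl : 0 < l) (hx : 0 < x) :
    exp (-l * m x) ∈ Icc (0:ℝ) 1 := by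
  refine ⟨(exp_pos _).le, exp_le_one_iff.2 ?_⟩
  have := mul_nonneg hl.le (h.nonneg x hx)
  linarith

lemma integrable_test (h : TauberianData m) {φ : ℝ → ℝ} (hφ : Continuous φ) {l : ℝ} (hl : 0 < l) :
    IntegrableOn (fun x => exp (-l * m x) * φ (exp (-l * m x))) (Ioi 0) := by
  obtain ⟨C, hC⟩ := isCompact_Icc.exists_bound_of_continuousOn (s := Icc (0:ℝ) 1) hφ.continuousOn
  have hcont : ContinuousOn (fun x => exp (-l * m x)) (Ioi 0) :=
    continuous_exp.comp_continuousOn (continuousOn_const.mul h.cont)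
  refine Integrable.mono' ((h.integrable l hl).mul_const C) ?_ ?_
  · exact (hcont.mul (hφ.comp_continuousOn hcont)).aestronglyMeasurable measurableSet_Ioi
  · refine (ae_restrict_mem measurableSet_Ioi).mono fun x hx => ?_
    rw [norm_mul, Real.norm_of_nonneg (exp_pos _).le]
    exact mul_le_mul_of_nonneg_left (hC _ (h.exp_mem hl hx)) (exp_pos _).le

lemma test_sub_le (h : TauberianData m) {φ ψ : ℝ → ℝ} (hφ : Continuous φ) (hψ : Continuous ψ)
    {ε l : ℝ} (hl : 0 < l) (hε : ∀ u ∈ Icc (0:ℝ) 1, |φ u - ψ u| ≤ ε) :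
    |laplaceTest m φ l - laplaceTest m ψ l| ≤
      ε * (l * ∫ x in Ioi (0:ℝ), exp (-l * m x)) := by
  unfold laplaceTest
  rw [← mul_sub, ← integral_sub (h.integrable_test hφ hl) (h.integrable_test hψ hl), abs_mul,
    abs_of_pos hl, mul_left_comm, ← integral_const_mul]
  refine mul_le_mul_of_nonneg_left ?_ hl.le
  rw [← Real.norm_eq_abs]
  refine norm_integral_le_of_norm_le ((h.integrable l hl).const_mul ε) ?_
  refine (ae_restrict_mem measurableSet_Ioi).mono fun x hx => ?_
  rw [← mul_sub, norm_mul, Real.norm_of_nonneg (exp_pos _).le, mul_comm]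
  exact mul_le_mul_of_nonneg_right (hε _ (h.exp_mem hl hx)) (exp_pos _).le

open Polynomial in
lemma tendsto_polynomial (h : TauberianData m) (p : ℝ[X]) :
    Tendsto (laplaceTest m fun u => p.eval u) (𝓝[>] 0) (𝓝 (∫ u in (0:ℝ)..1, p.eval u)) := by
  induction p using Polynomial.induction_on' with
  | add p q hp hq =>
    have e : (∫ u in (0:ℝ)..1, (p + q).eval u) =
        (∫ u in (0:ℝ)..1, p.eval u) + ∫ u in (0:ℝ)..1, q.eval u := by
      simp only [eval_add]
      exact intervalIntegral.integral_add (p.continuous.intervalIntegrable _ _)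
        (q.continuous.intervalIntegrable _ _)
    rw [e]
    refine (hp.add hq).congr' ?_
    filter_upwards [self_mem_nhdsWithin] with l hl
    unfold laplaceTest
    rw [← mul_add, ← integral_add (h.integrable_test p.continuous hl)
      (h.integrable_test q.continuous hl)]
    simp only [eval_add, mul_add]
  | monomial n a =>
    have hn : (0:ℝ) < n + 1 := by positivity
    have e : (∫ u in (0:ℝ)..1, (monomial n a).eval u) = a * (1 / (n + 1)) * 1 := by
      simp [eval_monomial]
    rw [e]
    have h1 : Tendsto (fun l : ℝ => (n + 1) * l) (𝓝[>] 0) (𝓝[>] 0) := by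
      refine tendsto_nhdsWithin_iff.2 ⟨?_, ?_⟩
      · exact ((continuous_const.mul continuous_id).tendsto' 0 0 (by simp)).mono_left
          nhdsWithin_le_nhds
      · filter_upwards [self_mem_nhdsWithin] with l hl
        exact mul_pos hn hl
    refine ((h.lim.comp h1).const_mul (a * (1 / (n + 1)))).congr fun l => ?_
    simp only [laplaceTest, Function.comp, eval_monomial]
    have e2 : ∀ x, exp (-l * m x) * (a * exp (-l * m x) ^ n) = a * exp (-((n + 1) * l) * m x) := by
      intro x
      rw [mul_left_comm, ← pow_succ', ← exp_nat_mul]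
      push_cast
      congr 2; ring
    simp only [e2]
    rw [integral_const_mul]
    field_simp

/-- Karamata's theorem for continuous test functions, by Weierstrass approximation from the
polynomial case. -/
lemma tendsto_test (h : TauberianData m) {φ : ℝ → ℝ} (hφ : Continuous φ) :
    Tendsto (laplaceTest m φ) (𝓝[>] 0) (𝓝 (∫ u in (0:ℝ)..1, φ u)) := by
  rw [Metric.tendsto_nhds]
  intro ε hε
  obtain ⟨p, hp⟩ := exists_polynomial_near_of_continuousOn 0 1 φ hφ.continuousOn (ε / 4)
    (by positivity)
  have h1 := (Metric.tendsto_nhds.1 (h.tendsto_polynomial p)) (ε / 4) (by positivity)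
  have h2 := h.lim.eventually (gt_mem_nhds (show (1:ℝ) < 2 by norm_num))
  have h3 : |(∫ u in (0:ℝ)..1, p.eval u) - ∫ u in (0:ℝ)..1, φ u| ≤ ε / 4 := by
    rw [← intervalIntegral.integral_sub (p.continuous.intervalIntegrable _ _)
      (hφ.intervalIntegrable _ _), ← Real.norm_eq_abs]
    have := intervalIntegral.norm_integral_le_of_norm_le_const (a := (0:ℝ)) (b := 1) (C := ε / 4)
      (f := fun u => p.eval u - φ u) fun u hu => by
        rw [uIoc_of_le zero_le_one] at hu
        exact (hp u ⟨hu.1.le, hu.2⟩).le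
    simpa using this
  filter_upwards [h1, h2, self_mem_nhdsWithin] with l hl1 hl2 hl
  have h4 := h.test_sub_le p.continuous hφ hl (fun u hu => (hp u hu).le)
  rw [Real.dist_eq] at hl1 ⊢
  have h5 : ε / 4 * (l * ∫ x in Ioi (0:ℝ), exp (-l * m x)) ≤ ε / 4 * 2 := by gcongr
  rw [abs_lt] at *
  rw [abs_le] at *
  constructor <;> linarith [h4.1, h4.2, h3.1, h3.2, hl1.1, hl1.2]

end TauberianData

/-- For `0 < a < b`, a continuous test function: it vanishes on `(-∞, a]`, equals `1 / u` for
`u ≥ b`, and is at most `1 / u` in between. The maximum in the denominator only serves continuity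
at `0`. -/
noncomputable def cutoffInv (a b u : ℝ) : ℝ := max 0 (min 1 ((u - a) / (b - a))) / max u a

section cutoff
variable {a b u : ℝ}

lemma continuous_cutoffInv (ha : 0 < a) : Continuous (cutoffInv a b) := by
  unfold cutoffInv
  refine Continuous.div (by fun_prop) (by fun_prop) fun x => ?_
  exact (ha.trans_le (le_max_right _ _)).ne'

lemma cutoffInv_nonneg (ha : 0 < a) : 0 ≤ cutoffInv a b u :=
  div_nonneg (le_max_left _ _) (ha.le.trans (le_max_right _ _))

lemma cutoffInv_of_le (hab : a < b) (h : u ≤ a) : cutoffInv a b u = 0 := by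
  have : (u - a) / (b - a) ≤ 0 := div_nonpos_of_nonpos_of_nonneg (by linarith) (by linarith)
  unfold cutoffInv
  rw [max_eq_left ((min_le_right _ _).trans this), zero_div]

lemma cutoffInv_of_ge (hab : a < b) (h : b ≤ u) : cutoffInv a b u = 1 / u := by
  have : 1 ≤ (u - a) / (b - a) := by
    rw [le_div_iff₀ (by linarith)]; linarith
  unfold cutoffInv
  rw [min_eq_left this, max_eq_right zero_le_one, max_eq_left (by linarith)]

lemma cutoffInv_le (hu : 0 < u) : cutoffInv a b u ≤ 1 / u := by
  unfold cutoffInv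
  exact div_le_div₀ zero_le_one (max_le zero_le_one (min_le_left _ _)) hu (le_max_left _ _)

lemma mul_cutoffInv_le (hu : 0 < u) : u * cutoffInv a b u ≤ 1 := by
  have := mul_le_mul_of_nonneg_left (cutoffInv_le (a := a) (b := b) hu) hu.le
  rwa [mul_one_div_cancel hu.ne'] at this

lemma integral_cutoffInv_le (ha : 0 < a) (hab : a < b) (hb : b < 1) :
    ∫ u in (0:ℝ)..1, cutoffInv a b u ≤ -log a := by
  have hc := continuous_cutoffInv (b := b) ha
  have ii : ∀ x y : ℝ, IntervalIntegrable (cutoffInv a b) volume x y :=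
    fun x y => hc.intervalIntegrable x y
  rw [← intervalIntegral.integral_add_adjacent_intervals (ii 0 a) (ii a 1)]
  have h0 : ∫ u in (0:ℝ)..a, cutoffInv a b u = 0 := by
    rw [intervalIntegral.integral_congr (g := fun _ => (0:ℝ))]
    · simp
    · intro u hu
      rw [uIcc_of_le ha.le] at hu
      exact cutoffInv_of_le hab hu.2
  have h1 : ∫ u in a..1, cutoffInv a b u ≤ ∫ u in a..1, 1 / u := by
    refine intervalIntegral.integral_mono_on (by linarith) (ii _ _) ?_ fun u hu => ?_
    · refine intervalIntegral.intervalIntegrable_one_div (fun u hu => ?_) continuousOn_id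
      rw [uIcc_of_le (by linarith)] at hu
      exact (ha.trans_le hu.1).ne'
    · exact cutoffInv_le (ha.trans_le hu.1)
  rw [integral_one_div_of_pos ha one_pos, one_div, log_inv] at h1
  linarith

lemma le_integral_cutoffInv (ha : 0 < a) (hab : a < b) (hb : b < 1) :
    -log b ≤ ∫ u in (0:ℝ)..1, cutoffInv a b u := by
  have hc := continuous_cutoffInv (b := b) ha
  have ii : ∀ x y : ℝ, IntervalIntegrable (cutoffInv a b) volume x y :=
    fun x y => hc.intervalIntegrable x y
  have hb0 := ha.trans hab
  rw [← intervalIntegral.integral_add_adjacent_intervals (ii 0 b) (ii b 1)]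
  have h0 : 0 ≤ ∫ u in (0:ℝ)..b, cutoffInv a b u :=
    intervalIntegral.integral_nonneg hb0.le fun u _ => cutoffInv_nonneg ha
  have h1 : ∫ u in b..1, cutoffInv a b u = ∫ u in b..1, 1 / u := by
    refine intervalIntegral.integral_congr fun u hu => ?_
    rw [uIcc_of_le hb.le] at hu
    exact cutoffInv_of_ge hab hu.1
  rw [integral_one_div_of_pos hb0 one_pos, one_div, log_inv] at h1
  linarith
end cutoff

namespace TauberianData
open Filter Topology
variable {m : ℝ → ℝ}

lemma tendsto_atTop (h : TauberianData m) : Tendsto m atTop atTop := by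
  refine Filter.tendsto_atTop.2 fun b => ?_
  suffices ∃ x, 0 < x ∧ b ≤ m x by
    obtain ⟨x, hx, hb⟩ := this
    filter_upwards [eventually_ge_atTop x] with y hy
    exact hb.trans (h.mono x y hx hy)
  by_contra! hcon
  have : IntegrableOn (fun _ : ℝ => exp (-b)) (Ioi 0) := by
    refine Integrable.mono' (h.integrable 1 one_pos) aestronglyMeasurable_const ?_
    refine (ae_restrict_mem measurableSet_Ioi).mono fun x hx => ?_
    rw [Real.norm_of_nonneg (exp_pos _).le]
    have := hcon x hx
    exact exp_le_exp.2 (by linarith)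
  rw [integrableOn_const_iff] at this
  simp at this

/-- With `λ = 1 / m(x)` the integrand of Karamata's functional equals `1` on `(0, x]`, so
`x / m(x)` is bounded by a quantity close to `1`. -/
lemma eventually_le (h : TauberianData m) {η : ℝ} (hη : 0 < η) :
    ∀ᶠ x in atTop, x ≤ (1 + η) * m x := by
  set b := exp (-1)
  set a := exp (-1 - η / 2)
  have ha : 0 < a := exp_pos _
  have hab : a < b := exp_lt_exp.2 (by linarith)
  have hb : b < 1 := exp_lt_one_iff.2 (by norm_num)
  have h1 := integral_cutoffInv_le ha hab hb
  rw [log_exp] at h1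
  have h2 : ∀ᶠ l in 𝓝[>] (0:ℝ), laplaceTest m (cutoffInv a b) l < 1 + η :=
    (h.tendsto_test (continuous_cutoffInv ha)).eventually (gt_mem_nhds (by linarith))
  have h3 : Tendsto (fun x => (m x)⁻¹) atTop (𝓝[>] 0) :=
    tendsto_inv_atTop_nhdsGT_zero.comp h.tendsto_atTop
  filter_upwards [h3.eventually h2, h.tendsto_atTop.eventually_gt_atTop 0,
    eventually_gt_atTop 0] with x hx hm hx0
  have hl : 0 < (m x)⁻¹ := inv_pos.2 hm
  have h4 : x ≤ ∫ y in Ioi (0:ℝ), exp (-(m x)⁻¹ * m y) *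
      cutoffInv a b (exp (-(m x)⁻¹ * m y)) := by
    have i := h.integrable_test (continuous_cutoffInv (b := b) ha) hl
    calc x = ∫ y in Ioc 0 x, (1:ℝ) := by simp [hx0.le]
      _ ≤ ∫ y in Ioc 0 x, exp (-(m x)⁻¹ * m y) * cutoffInv a b (exp (-(m x)⁻¹ * m y)) := by
          refine setIntegral_mono_on ?_ (i.mono_set Ioc_subset_Ioi_self) measurableSet_Ioc
            fun y hy => ?_
          · rw [integrableOn_const_iff]; simp
          · rw [cutoffInv_of_ge hab, mul_one_div_cancel (exp_pos _).ne']
            refine exp_le_exp.2 ?_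
            have := h.mono y x hy.1 hy.2
            have : (m x)⁻¹ * m y ≤ 1 := by
              rw [inv_mul_le_iff₀ hm]; linarith
            linarith
      _ ≤ _ := setIntegral_mono_set i
          (Eventually.of_forall fun y => mul_nonneg (exp_pos _).le (cutoffInv_nonneg ha))
          Ioc_subset_Ioi_self.eventuallyLE
  have h5 := mul_le_mul_of_nonneg_left h4 hl.le
  unfold laplaceTest at hx
  have h6 : (m x)⁻¹ * x ≤ 1 + η := h5.trans hx.le
  rw [inv_mul_le_iff₀ hm] at h6
  linarith

/-- With `λ = 1 / m(x)` and the cutoff starting at `a = exp (-1)`, the integrand of Karamata's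
functional vanishes beyond `x` and is at most `1` before it. -/
lemma eventually_ge (h : TauberianData m) {η : ℝ} (hη : 0 < η) (hη1 : η < 1) :
    ∀ᶠ x in atTop, (1 - η) * m x ≤ x := by
  set b := exp (-1 + η / 2)
  set a := exp (-1)
  have ha : 0 < a := exp_pos _
  have hab : a < b := exp_lt_exp.2 (by linarith)
  have hb : b < 1 := exp_lt_one_iff.2 (by linarith)
  have h1 := le_integral_cutoffInv ha hab hb
  rw [log_exp] at h1
  have h2 : ∀ᶠ l in 𝓝[>] (0:ℝ), 1 - η < laplaceTest m (cutoffInv a b) l :=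
    (h.tendsto_test (continuous_cutoffInv ha)).eventually (lt_mem_nhds (by linarith))
  have h3 : Tendsto (fun x => (m x)⁻¹) atTop (𝓝[>] 0) :=
    tendsto_inv_atTop_nhdsGT_zero.comp h.tendsto_atTop
  filter_upwards [h3.eventually h2, h.tendsto_atTop.eventually_gt_atTop 0,
    eventually_gt_atTop 0] with x hx hm hx0
  have hl : 0 < (m x)⁻¹ := inv_pos.2 hm
  have h4 : ∫ y in Ioi (0:ℝ), exp (-(m x)⁻¹ * m y) *
      cutoffInv a b (exp (-(m x)⁻¹ * m y)) ≤ x := by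
    have i := h.integrable_test (continuous_cutoffInv (b := b) ha) hl
    calc _ ≤ ∫ y in Ioi (0:ℝ), (Ioc 0 x).indicator (fun _ => (1:ℝ)) y := by
          refine setIntegral_mono_on i ?_ measurableSet_Ioi fun y hy => ?_
          · refine IntegrableOn.integrable_indicator ?_ measurableSet_Ioc |>.integrableOn
            rw [integrableOn_const_iff]; simp
          · by_cases hyx : y ≤ x
            · rw [indicator_of_mem (show y ∈ Ioc 0 x from ⟨hy, hyx⟩)]
              exact mul_cutoffInv_le (exp_pos _)
            · rw [indicator_of_notMem (fun h => hyx h.2), cutoffInv_of_le hab, mul_zero]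
              refine exp_le_exp.2 ?_
              have := h.mono x y hx0 (not_le.1 hyx).le
              have : 1 ≤ (m x)⁻¹ * m y := by
                rw [le_inv_mul_iff₀ hm]; linarith
              linarith
      _ = x := by
          rw [setIntegral_indicator measurableSet_Ioc, inter_eq_right.2 Ioc_subset_Ioi_self]
          simp [hx0.le]
  have h5 := mul_le_mul_of_nonneg_left h4 hl.le
  unfold laplaceTest at hx
  have h6 : 1 - η ≤ (m x)⁻¹ * x := hx.le.trans h5
  rw [le_inv_mul_iff₀ hm] at h6
  linarith

end TauberianData

namespace BalancedEq
open Filter Topology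
variable {β : ℝ} {c : ℕ → ℝ} {f : ℝ → ℝ}

lemma tauberianData (h : BalancedEq β c f) : TauberianData (meanIndex f) := by
  have hs : ∀ l : ℝ, 0 < l → exp (-l) ∈ Ioo (0:ℝ) 1 := fun l hl =>
    ⟨exp_pos _, exp_lt_one_iff.2 (by linarith)⟩
  have he : ∀ l x : ℝ, exp (-l) ^ meanIndex f x = exp (-l * meanIndex f x) := fun l x => by
    rw [← exp_mul]
  refine ⟨fun x hx => h.meanIndex_nonneg hx.le, fun x y hx hxy => h.meanIndex_mono hx hxy,
    h.continuousOn_meanIndex.mono Ioi_subset_Ici_self, fun l hl => ?_, ?_⟩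
  · simpa only [he] using (h.laplace (hs l hl)).1
  · have hslope : Tendsto (fun l : ℝ => l / (1 - exp (-l))) (𝓝[>] 0) (𝓝 1) := by
      have h1 : HasDerivAt (fun l : ℝ => 1 - exp (-l)) 1 0 := by
        have := ((hasDerivAt_neg (0:ℝ)).exp).const_sub 1
        simpa using this
      have h2 := (h1.tendsto_slope_zero_right).inv₀ one_ne_zero
      simpa [div_eq_mul_inv, mul_comm] using h2
    have hexp : Tendsto (fun l : ℝ => exp (-l)) (𝓝[>] 0) (𝓝 1) :=
      ((continuous_exp.comp continuous_neg).tendsto' 0 1 (by simp)).mono_left nhdsWithin_le_nhds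
    have hid : Tendsto (fun l : ℝ => l * β) (𝓝[>] 0) (𝓝 0) :=
      ((continuous_id.mul continuous_const).tendsto' 0 0 (by simp)).mono_left nhdsWithin_le_nhds
    have hup : Tendsto (fun l : ℝ => l * (1 / (1 - exp (-l)) - β)) (𝓝[>] 0) (𝓝 1) := by
      refine ((hslope.sub hid).congr fun l => ?_).trans (by simp)
      ring
    have hlo := hexp.mul hup
    rw [one_mul] at hlo
    refine tendsto_of_tendsto_of_tendsto_of_le_of_le' hlo hup ?_ ?_
    · filter_upwards [self_mem_nhdsWithin] with l hl
      have := (h.laplace (hs l hl)).2.2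
      simp only [he] at this
      have := mul_le_mul_of_nonneg_left this (le_of_lt hl)
      linarith
    · filter_upwards [self_mem_nhdsWithin] with l hl
      have := (h.laplace (hs l hl)).2.1
      simp only [he] at this
      exact mul_le_mul_of_nonneg_left this (le_of_lt hl)

/-- The asymptotic bound made valid on all of `(0, ∞)` at the cost of an additive constant. -/
lemma exists_le (h : BalancedEq β c f) {η : ℝ} (hη : 0 < η) :
    ∃ C, 0 ≤ C ∧ ∀ x, 0 < x → x ≤ (1 + η) * meanIndex f x + C := by
  obtain ⟨X, hX⟩ := eventually_atTop.1 (h.tauberianData.eventually_le hη)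
  refine ⟨|X|, abs_nonneg _, fun x hx => ?_⟩
  have h1 := mul_nonneg (show 0 ≤ 1 + η by linarith) (h.meanIndex_nonneg hx.le)
  rcases le_total X x with h2 | h2
  · linarith [hX x h2, abs_nonneg X]
  · linarith [le_abs_self X]

lemma exists_ge (h : BalancedEq β c f) {η : ℝ} (hη : 0 < η) (hη1 : η < 1) :
    ∃ C, 0 ≤ C ∧ ∀ x, 0 < x → (1 - η) * meanIndex f x ≤ x + C := by
  obtain ⟨X, hX⟩ := eventually_atTop.1 (h.tauberianData.eventually_ge hη hη1)
  refine ⟨|X|, abs_nonneg _, fun x hx => ?_⟩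
  rcases le_total X x with h2 | h2
  · linarith [hX x h2, abs_nonneg X]
  · have h3 := h.meanIndex_mono hx (h2.trans (le_abs_self X))
    have h4 := hX |X| (le_abs_self X)
    nlinarith
end BalancedEq

/-! ### Bounds on ratios of consecutive coefficients -/

lemma exists_max_of_eventually_le {a : ℕ → ℝ} {k₀ : ℕ} (h : ∀ᶠ n in Filter.atTop, a n ≤ a k₀) :
    ∃ k, ∀ n, a n ≤ a k := by
  obtain ⟨N, hN⟩ := Filter.eventually_atTop.1 h
  obtain ⟨k, -, hk⟩ := Finset.exists_max_image (Finset.range (N + k₀ + 1)) a ⟨0, by simp⟩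
  refine ⟨k, fun n => ?_⟩
  by_cases hn : n < N + k₀ + 1
  · exact hk n (Finset.mem_range.2 hn)
  · exact (hN n (by omega)).trans (hk k₀ (Finset.mem_range.2 (by omega)))

namespace BalancedEq
open Filter Topology
variable {β : ℝ} {c : ℕ → ℝ} {f : ℝ → ℝ}

/-- `c n ≤ (n + 1) c (n + 1)`. The Tauberian theorem bounds the upper limit of
`c k / ((k + 1) c (k + 1))` by `1`, so a value above `1` would make the maximum `Λ > 1` attained.
Then `f < Λ f'`, that is `x < Λ m(x)`, and averaging contradicts maximality. -/
lemma coeff_le (h : BalancedEq β c f) (n : ℕ) : c n ≤ derivCoeff c n := by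
  set r : ℕ → ℝ := fun k => c k / derivCoeff c k with hr
  by_contra! hcon
  have hr1 : 1 < r n := (one_lt_div (h.derivCoeff_pos n)).2 hcon
  have ev : ∀ᶠ k in atTop, r k < r n := by
    obtain ⟨C, hC0, hC⟩ := h.exists_le (η := (r n - 1) / 2) (by linarith)
    obtain ⟨N, hN⟩ := exists_nat_ge ((C + 1) / ((r n - 1) / 2))
    filter_upwards [eventually_ge_atTop (N + 1)] with k hk
    have h1 := h.linear_pos k (p := -1) (q := 1 + (r n - 1) / 2) (r := C + 1) fun x hx => by
      linarith [hC x hx]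
    rw [if_neg (by omega)] at h1
    rw [div_le_iff₀ (by linarith)] at hN
    have hk' : (N : ℝ) + 1 ≤ k := by exact_mod_cast hk
    have h2 : c k / c (k + 1) < r n * (k + 1) := by nlinarith
    rw [div_lt_iff₀ (h.pos _)] at h2
    change c k / derivCoeff c k < r n
    rw [div_lt_iff₀ (h.derivCoeff_pos k), derivCoeff]
    linarith
  obtain ⟨k, hk⟩ := exists_max_of_eventually_le (ev.mono fun _ h => h.le)
  have hL : 1 < r k := hr1.trans_le (hk n)
  have hle : ∀ j, c j ≤ r k * derivCoeff c j := fun j =>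
    (div_le_iff₀ (h.derivCoeff_pos j)).1 (hk j)
  obtain ⟨j, hj⟩ := ev.exists
  have hlt : c j < r k * derivCoeff c j :=
    (div_lt_iff₀ (h.derivCoeff_pos j)).1 (hj.trans_le (hk n))
  have h1 := h.linear_pos k (p := -1) (q := r k) (r := 0) fun x hx => by
    have : f x < r k * deriv f x := by
      refine hasSum_lt (i := j) (fun i => ?_) ?_ (h.hasSum hx.le)
        ((h.hasSum_deriv hx.le).mul_left (r k))
      · have := mul_le_mul_of_nonneg_right (hle i) (pow_pos hx i).le
        simpa [mul_assoc] using this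
      · have := mul_lt_mul_of_pos_right hlt (pow_pos hx j)
        simpa [mul_assoc] using this
    have h2 : x < r k * meanIndex f x := by
      rw [meanIndex, ← mul_div_assoc, lt_div_iff₀ (h.f_pos hx.le)]
      nlinarith
    linarith
  have h3 : c k / c (k + 1) = r k * (k + 1) := by
    have := h.pos (k + 1)
    simp only [hr, derivCoeff]
    field_simp
  have hw : (if k = 0 then 1 - β else 1) ≤ 1 := by
    split_ifs <;> linarith [h.nonneg]
  have h4 := mul_le_mul_of_nonneg_left hw (show 0 ≤ r k * (k + 1) + 0 by positivity)
  rw [h3] at h1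
  linarith

/-- `n c (n + 1) ≤ c n`. Mirror image of `coeff_le` for the minimum of `c k / (k c (k + 1))`,
`k ≥ 1`, which the sequences below index by `k - 1`. -/
lemma le_coeff (h : BalancedEq β c f) (n : ℕ) : n * c (n + 1) ≤ c n := by
  rcases n with _ | n
  · simpa using (h.pos 0).le
  set r : ℕ → ℝ := fun k => c (k + 1) / ((k + 1) * c (k + 2)) with hr
  by_contra! hcon
  push_cast at hcon
  have hd : ∀ k : ℕ, 0 < ((k:ℝ) + 1) * c (k + 2) := fun k =>
    mul_pos (by positivity) (h.pos _)
  have hr1 : r n < 1 := (div_lt_one (hd n)).2 hcon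
  have hr0 : ∀ k, 0 < r k := fun k => div_pos (h.pos _) (hd k)
  have ev : ∀ᶠ k in atTop, r n < r k := by
    obtain ⟨C, hC0, hC⟩ := h.exists_ge (η := (1 - r n) / 2) (by linarith) (by linarith [hr0 n])
    obtain ⟨N, hN⟩ := exists_nat_ge ((C + 1) / ((1 - r n) / 2))
    filter_upwards [eventually_ge_atTop N] with k hk
    have h1 := h.linear_pos (k + 1) (p := 1) (q := -(1 - (1 - r n) / 2)) (r := C + 1) fun x hx => by
      linarith [hC x hx]
    rw [if_neg (by omega)] at h1
    rw [div_le_iff₀ (by linarith)] at hN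
    have hk' : (N : ℝ) ≤ k := by exact_mod_cast hk
    push_cast at h1
    have h2 : r n * (k + 1) < c (k + 1) / c (k + 1 + 1) := by nlinarith [hr0 n]
    rw [lt_div_iff₀ (h.pos _)] at h2
    simp only [hr] at h2 ⊢
    rw [lt_div_iff₀ (hd k), ← mul_assoc]
    exact h2
  obtain ⟨k, hk⟩ := exists_max_of_eventually_le (a := fun k => -r k) (k₀ := n)
    (ev.mono fun _ h => neg_le_neg h.le)
  have hle : ∀ j : ℕ, r k * (j * c (j + 1)) ≤ c j := fun j => by
    rcases j with _ | j
    · simpa using (h.pos 0).le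
    · have := (le_div_iff₀ (hd j)).1 (neg_le_neg_iff.1 (hk j))
      push_cast
      exact this
  have h1 := h.linear_pos (k + 1) (p := 1) (q := -r k) (r := r k) fun x hx => by
    have s1 : HasSum (fun j : ℕ => x * (c j * x ^ j)) (x * f x) := (h.hasSum hx.le).mul_left x
    have s2 : HasSum (fun j : ℕ => c (j + 1) * x ^ (j + 1)) (f x - 1) := by
      have := (hasSum_nat_add_iff' 1).2 (h.hasSum hx.le)
      simpa [h.zero] using this
    have s3 := ((h.hasSum_deriv hx.le).mul_left x |>.sub s2).mul_left (r k)
    have : r k * (x * deriv f x - (f x - 1)) < x * f x := by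
      refine hasSum_lt (i := 0) (fun i => ?_) ?_ s3 s1
      · have := mul_le_mul_of_nonneg_right (hle i) (pow_pos hx (i + 1)).le
        simp only [derivCoeff]
        calc _ = r k * (i * c (i + 1)) * x ^ (i + 1) := by rw [pow_succ]; ring
          _ ≤ c i * x ^ (i + 1) := this
          _ = _ := by rw [pow_succ]; ring
      · simp only [derivCoeff]
        simpa [mul_comm, h.zero] using hx
    have hf := h.f_pos hx.le
    have h2 : r k * meanIndex f x < x + r k := by
      rw [meanIndex, ← mul_div_assoc, div_lt_iff₀ hf]
      have := hr0 k
      nlinarith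
    linarith
  rw [if_neg (by omega)] at h1
  have h3 : c (k + 1) / c (k + 1 + 1) = r k * (k + 1) := by
    have := h.pos (k + 2)
    have h4 : c (k + 1 + 1) = c (k + 2) := rfl
    simp only [hr, h4]
    field_simp
  rw [h3] at h1
  push_cast at h1
  linarith

lemma le_deriv (h : BalancedEq β c f) {x : ℝ} (hx : 0 ≤ x) : f x ≤ deriv f x :=
  hasSum_le (fun n => mul_le_mul_of_nonneg_right (h.coeff_le n) (pow_nonneg hx n))
    (h.hasSum hx) (h.hasSum_deriv hx)

lemma deriv_le (h : BalancedEq β c f) {x : ℝ} (hx : 0 ≤ x) :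
    x * deriv f x ≤ (x + 1) * f x := by
  have s2 : HasSum (fun j : ℕ => c (j + 1) * x ^ (j + 1)) (f x - 1) := by
    have := (hasSum_nat_add_iff' 1).2 (h.hasSum hx)
    simpa [h.zero] using this
  have := hasSum_le (fun n => ?_) ((h.hasSum_deriv hx).mul_left x |>.sub s2)
    ((h.hasSum hx).mul_left x)
  · linarith
  · have := mul_le_mul_of_nonneg_right (h.le_coeff n) (pow_nonneg hx (n + 1))
    simp only [derivCoeff]
    rw [pow_succ] at this ⊢
    linarith

/-- Averaging `x ≤ m(x)` against `1 / f`, which has total mass `1 - β < 1`, gives `c 1 > 1`; the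
bound then propagates by `coeff_le`. -/
lemma one_div_factorial_lt (h : BalancedEq β c f) (hβ : 0 < β) (n : ℕ) :
    1 / ((n + 1).factorial : ℝ) < c (n + 1) := by
  induction n with
  | zero =>
    have h1 : 0 ≤ -1 * (c 0 / c 1) + (1 * ((0:ℕ) + 1) + 0) * (1 - β) := by
      have e := (h.integral_linear 0 (-1) 1 0).2
      rw [if_pos rfl] at e
      rw [← e]
      refine mul_nonneg (h.pos 0).le (setIntegral_nonneg measurableSet_Ioi fun x hx => ?_)
      have hx0 : (0:ℝ) < x := hx
      have hf := h.f_pos hx0.le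
      refine mul_nonneg (by positivity) ?_
      have : x ≤ meanIndex f x := by
        rw [meanIndex, le_div_iff₀ hf]
        exact mul_le_mul_of_nonneg_left (h.le_deriv hx0.le) hx0.le
      linarith
    rw [h.zero] at h1
    have h2 : 1 / c 1 < 1 := by
      push_cast at h1
      linarith
    simpa using (div_lt_one (h.pos 1)).1 h2
  | succ n ih =>
    have h1 := h.coeff_le (n + 1)
    simp only [derivCoeff] at h1
    rw [Nat.factorial_succ]
    push_cast at h1 ⊢
    have h2 := ih.trans_le h1
    rw [div_lt_iff₀ (by positivity)] at h2 ⊢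
    linarith

end BalancedEq

/-! ### Growth of the quotient for two parameters -/

/-- `H(x) = log f(x) - x`, the logarithm of `f` relative to the exponential. -/
noncomputable def logExcess (f : ℝ → ℝ) (x : ℝ) : ℝ := log (f x) - x

/-- The exponential average `J(A) = ∫₀^∞ exp (-t) H(A t) dt`. -/
noncomputable def expMean (f : ℝ → ℝ) (A : ℝ) : ℝ := ∫ t in Ioi (0:ℝ), exp (-t) * logExcess f (A * t)

/-- An explicit majorant of `|log t|` that is integrable against `exp (-t)`. -/
noncomputable def logWeight (t : ℝ) : ℝ := t + 2 * t ^ ((1 / 2 : ℝ) - 1)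

lemma integrable_exp_neg : IntegrableOn (fun t : ℝ => exp (-t)) (Ioi 0) := by
  simpa using integrableOn_exp_neg_Ioi 0

lemma integrable_logWeight : IntegrableOn (fun t => exp (-t) * logWeight t) (Ioi 0) := by
  have h1 := Real.GammaIntegral_convergent (s := 2) (by norm_num)
  have h2 := (Real.GammaIntegral_convergent (s := 1 / 2) (by norm_num)).const_mul 2
  refine (h1.add h2).congr (Filter.Eventually.of_forall fun t => ?_)
  simp only [Pi.add_apply, logWeight]
  rw [show (2:ℝ) - 1 = 1 by norm_num, rpow_one]
  ring

lemma abs_log_le_logWeight {t : ℝ} (ht : 0 < t) : |log t| ≤ logWeight t := by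
  have h1 : 0 < t ^ ((1 / 2 : ℝ) - 1) := rpow_pos_of_pos ht _
  have h2 := log_le_sub_one_of_pos ht
  have h3 := log_le_rpow_div (x := t⁻¹) (ε := 1 / 2) (inv_pos.2 ht).le (by norm_num)
  rw [log_inv, inv_rpow ht.le, ← rpow_neg ht.le, show -(1 / 2 : ℝ) = 1 / 2 - 1 by norm_num] at h3
  unfold logWeight
  rw [abs_le]
  constructor <;> linarith

namespace BalancedEq
open Filter Topology
variable {β : ℝ} {c : ℕ → ℝ} {f : ℝ → ℝ}

lemma f_hasDerivAt (h : BalancedEq β c f) (x : ℝ) : HasDerivAt f (deriv f x) x :=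
  (h.hasDerivAt x).differentiableAt.hasDerivAt

lemma logExcess_hasDerivAt (h : BalancedEq β c f) {x : ℝ} (hx : 0 < x) :
    HasDerivAt (logExcess f) (deriv f x / f x - 1) x :=
  ((h.f_hasDerivAt x).log (h.f_pos hx.le).ne').sub (hasDerivAt_id x)

lemma continuousOn_logExcess (h : BalancedEq β c f) : ContinuousOn (logExcess f) (Ioi 0) :=
  fun _ hx => (h.logExcess_hasDerivAt hx).continuousAt.continuousWithinAt

lemma logExcess_mono (h : BalancedEq β c f) {x y : ℝ} (hx : 0 < x) (hxy : x ≤ y) :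
    logExcess f x ≤ logExcess f y := by
  refine monotoneOn_of_deriv_nonneg (convex_Ioi (0:ℝ)) h.continuousOn_logExcess ?_ ?_ hx
    (hx.trans_le hxy) hxy
  · rw [interior_Ioi]
    exact fun z hz => (h.logExcess_hasDerivAt hz).differentiableAt.differentiableWithinAt
  · rw [interior_Ioi]
    intro z hz
    have hz0 : (0:ℝ) < z := hz
    rw [(h.logExcess_hasDerivAt hz).deriv, sub_nonneg, le_div_iff₀ (h.f_pos hz0.le), one_mul]
    exact h.le_deriv hz0.le

/-- `log x - H(x)` is nondecreasing, which is the inequality `x f' ≤ (x + 1) f`. -/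
lemma logExcess_le (h : BalancedEq β c f) {x y : ℝ} (hx : 0 < x) (hxy : x ≤ y) :
    logExcess f y ≤ logExcess f x + (log y - log x) := by
  have hd : ∀ z ∈ Ioi (0:ℝ), HasDerivAt (fun z => log z - logExcess f z)
      (z⁻¹ - (deriv f z / f z - 1)) z := fun z hz =>
    (hasDerivAt_log (ne_of_gt hz)).sub (h.logExcess_hasDerivAt hz)
  have := monotoneOn_of_deriv_nonneg (convex_Ioi (0:ℝ))
    (fun z hz => (hd z hz).continuousAt.continuousWithinAt) ?_ ?_ hx (hx.trans_le hxy) hxy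
  · linarith
  · rw [interior_Ioi]
    exact fun z hz => (hd z hz).differentiableAt.differentiableWithinAt
  · rw [interior_Ioi]
    intro z hz
    have hz0 : (0:ℝ) < z := hz
    have hf := h.f_pos hz0.le
    rw [(hd z hz).deriv, sub_nonneg, sub_le_iff_le_add, div_le_iff₀ hf]
    have h1 := h.deriv_le hz0.le
    have h2 : deriv f z ≤ (z + 1) * f z / z := by
      rw [le_div_iff₀ hz0]; linarith
    calc _ ≤ _ := h2
      _ = _ := by field_simp; ring

lemma abs_logExcess_sub_le (h : BalancedEq β c f) {A t : ℝ} (hA : 0 < A) (ht : 0 < t) :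
    |logExcess f (A * t) - logExcess f A| ≤ logWeight t := by
  refine le_trans ?_ (abs_log_le_logWeight ht)
  have hAt := mul_pos hA ht
  have hl : log (A * t) = log A + log t := log_mul hA.ne' ht.ne'
  rcases le_total 1 t with h1 | h1
  · have h2 : A ≤ A * t := le_mul_of_one_le_right hA.le h1
    have h3 := h.logExcess_mono hA h2
    have h4 := h.logExcess_le hA h2
    rw [abs_of_nonneg (by linarith), abs_of_nonneg (log_nonneg h1)]
    linarith
  · have h2 : A * t ≤ A := mul_le_of_le_one_right hA.le h1
    have h3 := h.logExcess_mono hAt h2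
    have h4 := h.logExcess_le hAt h2
    rw [abs_of_nonpos (by linarith), abs_of_nonpos (log_nonpos ht.le h1)]
    linarith

lemma continuousOn_logExcess_mul (h : BalancedEq β c f) {A : ℝ} (hA : 0 < A) :
    ContinuousOn (fun t => logExcess f (A * t)) (Ioi 0) :=
  h.continuousOn_logExcess.comp (continuousOn_const.mul continuousOn_id)
    fun _ ht => mul_pos hA ht

lemma integrable_expMean (h : BalancedEq β c f) {A : ℝ} (hA : 0 < A) :
    IntegrableOn (fun t => exp (-t) * logExcess f (A * t)) (Ioi 0) := by
  refine Integrable.mono' ((integrable_exp_neg.mul_const |logExcess f A|).add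
    integrable_logWeight) ?_ ?_
  · exact ((continuous_exp.comp continuous_neg).continuousOn.mul
      (h.continuousOn_logExcess_mul hA)).aestronglyMeasurable measurableSet_Ioi
  · refine (ae_restrict_mem measurableSet_Ioi).mono fun t ht => ?_
    rw [norm_mul, Real.norm_of_nonneg (exp_pos _).le, Pi.add_apply, ← mul_add]
    refine mul_le_mul_of_nonneg_left ?_ (exp_pos _).le
    have h1 := h.abs_logExcess_sub_le hA ht
    have h2 := abs_sub_abs_le_abs_sub (logExcess f (A * t)) (logExcess f A)
    rw [Real.norm_eq_abs]
    linarith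

/-- `J(A)` and `H(A)` differ by at most a constant independent of `A` and of `f`. -/
lemma abs_expMean_sub_le (h : BalancedEq β c f) {A : ℝ} (hA : 0 < A) :
    |expMean f A - logExcess f A| ≤ ∫ t in Ioi (0:ℝ), exp (-t) * logWeight t := by
  have e : logExcess f A = ∫ t in Ioi (0:ℝ), exp (-t) * logExcess f A := by
    rw [integral_mul_const, integral_exp_neg_Ioi_zero, one_mul]
  rw [e]
  unfold expMean
  rw [← integral_sub (h.integrable_expMean hA) (integrable_exp_neg.mul_const _),
    ← Real.norm_eq_abs]
  refine norm_integral_le_of_norm_le integrable_logWeight ?_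
  refine (ae_restrict_mem measurableSet_Ioi).mono fun t ht => ?_
  rw [← mul_sub, norm_mul, Real.norm_of_nonneg (exp_pos _).le]
  exact mul_le_mul_of_nonneg_left (h.abs_logExcess_sub_le hA ht) (exp_pos _).le

/-- The balanced equation at `s = (A - 1) / A` after the substitution `x = A t`. -/
lemma rescaled (h : BalancedEq β c f) {A : ℝ} (hA : 1 < A) :
    IntegrableOn (fun t => exp (-t) *
      exp (-(logExcess f (A * t) - logExcess f ((A - 1) * t)))) (Ioi 0) ∧
    A * ∫ t in Ioi (0:ℝ), exp (-t) *
      exp (-(logExcess f (A * t) - logExcess f ((A - 1) * t))) = A - β := by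
  have hA0 : 0 < A := by linarith
  have hs : (A - 1) / A ∈ Ico (0:ℝ) 1 :=
    ⟨div_nonneg (by linarith) hA0.le, (div_lt_one hA0).2 (by linarith)⟩
  have e : ∀ t ∈ Ioi (0:ℝ), exp (-t) * exp (-(logExcess f (A * t) - logExcess f ((A - 1) * t)))
      = (fun x => f ((A - 1) / A * x) / f x) (A * t) := fun t ht => by
    have ht0 : (0:ℝ) < t := ht
    have h1 := h.f_pos (mul_pos hA0 ht0).le
    have h2 := h.f_pos (mul_pos (sub_pos.2 hA) ht0).le
    have e1 : (A - 1) / A * (A * t) = (A - 1) * t := by field_simp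
    simp only [e1]
    rw [← exp_add, ← exp_log (div_pos h2 h1), log_div h2.ne' h1.ne']
    simp only [logExcess]
    congr 1; ring
  constructor
  · refine (integrableOn_congr_fun e measurableSet_Ioi).2 ?_
    exact (integrableOn_Ioi_comp_mul_left_iff (fun x => f ((A - 1) / A * x) / f x) 0 hA0).2
      (by simpa using h.integrable_ratio hs)
  · rw [setIntegral_congr_fun measurableSet_Ioi e,
      integral_comp_mul_left_Ioi (fun x => f ((A - 1) / A * x) / f x) 0 hA0, mul_zero,
      h.balance _ hs, smul_eq_mul]
    have : 1 - (A - 1) / A = 1 / A := by field_simp; ring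
    rw [this]
    field_simp

lemma integral_one_sub (h : BalancedEq β c f) {A : ℝ} (hA : 1 < A) :
    IntegrableOn (fun t => exp (-t) *
      (1 - exp (-(logExcess f (A * t) - logExcess f ((A - 1) * t))))) (Ioi 0) ∧
    A * ∫ t in Ioi (0:ℝ), exp (-t) *
      (1 - exp (-(logExcess f (A * t) - logExcess f ((A - 1) * t)))) = β := by
  obtain ⟨h1, h2⟩ := h.rescaled hA
  simp only [mul_one_sub]
  refine ⟨integrable_exp_neg.sub h1, ?_⟩
  rw [integral_sub integrable_exp_neg h1, integral_exp_neg_Ioi_zero, mul_sub, h2]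
  ring

lemma expMean_sub (h : BalancedEq β c f) {A : ℝ} (hA : 1 < A) :
    IntegrableOn (fun t => exp (-t) *
      (logExcess f (A * t) - logExcess f ((A - 1) * t))) (Ioi 0) ∧
    expMean f A - expMean f (A - 1) = ∫ t in Ioi (0:ℝ), exp (-t) *
      (logExcess f (A * t) - logExcess f ((A - 1) * t)) := by
  have h1 := h.integrable_expMean (A := A) (by linarith)
  have h2 := h.integrable_expMean (A := A - 1) (by linarith)
  simp only [mul_sub]
  exact ⟨h1.sub h2, (integral_sub h1 h2).symm⟩

/-- From `1 - exp (-z) ≤ z` with `z = H(A t) - H((A - 1) t)`. -/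
lemma le_expMean_sub (h : BalancedEq β c f) {A : ℝ} (hA : 1 < A) :
    β ≤ A * (expMean f A - expMean f (A - 1)) := by
  obtain ⟨h1, h2⟩ := h.expMean_sub hA
  obtain ⟨h3, h4⟩ := h.integral_one_sub hA
  rw [h2]
  refine h4.symm.le.trans (mul_le_mul_of_nonneg_left ?_ (by linarith))
  refine setIntegral_mono_on h3 h1 measurableSet_Ioi fun t ht => ?_
  refine mul_le_mul_of_nonneg_left ?_ (exp_pos _).le
  linarith [add_one_le_exp (-(logExcess f (A * t) - logExcess f ((A - 1) * t)))]

/-- From `(A - 1) z ≤ A (1 - exp (-z))`, valid since `0 ≤ z ≤ log (A / (A - 1))`. -/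
lemma expMean_sub_le (h : BalancedEq β c f) {A : ℝ} (hA : 1 < A) :
    (A - 1) * (expMean f A - expMean f (A - 1)) ≤ β := by
  obtain ⟨h1, h2⟩ := h.expMean_sub hA
  obtain ⟨h3, h4⟩ := h.integral_one_sub hA
  have hA0 : 0 < A := by linarith
  have hA1 : 0 < A - 1 := by linarith
  rw [h2, ← h4, ← integral_const_mul, ← integral_const_mul]
  refine setIntegral_mono_on (h1.const_mul _) (h3.const_mul _) measurableSet_Ioi fun t ht => ?_
  have ht0 : (0:ℝ) < t := ht
  rw [mul_left_comm, mul_left_comm A]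
  refine mul_le_mul_of_nonneg_left ?_ (exp_pos _).le
  have h5 := h.logExcess_le (mul_pos hA1 ht0) (y := A * t)
    (mul_le_mul_of_nonneg_right (by linarith) ht0.le)
  rw [log_mul hA0.ne' ht0.ne', log_mul hA1.ne' ht0.ne'] at h5
  set z := logExcess f (A * t) - logExcess f ((A - 1) * t) with hz
  have h6 : exp z ≤ A / (A - 1) := by
    rw [← exp_log (div_pos hA0 hA1), exp_le_exp, log_div hA0.ne' hA1.ne']
    linarith
  have h7 : (A - 1) * exp z ≤ A := by
    rw [le_div_iff₀ hA1] at h6; linarith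
  have h8 := add_one_le_exp z
  have h9 : exp z * exp (-z) = 1 := by rw [← exp_add]; simp
  have h10 : exp (-z) ≤ 1 := exp_le_one_iff.2 (by
    have := h.logExcess_mono (mul_pos hA1 ht0) (y := A * t)
      (mul_le_mul_of_nonneg_right (by linarith) ht0.le)
    rw [hz]; linarith)
  calc (A - 1) * z ≤ (A - 1) * (exp z - 1) := by gcongr; linarith
    _ = (A - 1) * exp z * (1 - exp (-z)) := by
        rw [mul_assoc, mul_one_sub, h9]
    _ ≤ A * (1 - exp (-z)) := mul_le_mul_of_nonneg_right h7 (by linarith)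

variable {γ : ℝ} {d : ℕ → ℝ} {g : ℝ → ℝ}

/-- The increments `β / A - γ / (A - 1)` summed over `A = 2, …, N + 1`; since
`β / (n + 2) - γ / (n + 1) = (β - γ) / (n + 1) - β / ((n + 1) (n + 2))`, a multiple of the harmonic
series and a telescoping series appear. -/
lemma le_expMean_diff (hf : BalancedEq β c f) (hg : BalancedEq γ d g) (N : ℕ) :
    expMean f 1 - expMean g 1 + (β - γ) * ∑ i ∈ Finset.range N, 1 / ((i : ℝ) + 1)
      - β * (1 - 1 / ((N : ℝ) + 1)) ≤ expMean f (N + 1) - expMean g (N + 1) := by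
  induction N with
  | zero => simp
  | succ N ih =>
    have hA : (1:ℝ) < N + 1 + 1 := by
      have : (0:ℝ) ≤ N := N.cast_nonneg
      linarith
    have h1 := hf.le_expMean_sub hA
    have h2 := hg.expMean_sub_le hA
    rw [add_sub_cancel_right] at h1 h2
    have h3 : β / (N + 1 + 1) ≤ expMean f (N + 1 + 1) - expMean f (N + 1) := by
      rw [div_le_iff₀ (by linarith)]; linarith
    have h4 : expMean g (N + 1 + 1) - expMean g (N + 1) ≤ γ / (N + 1) := by
      rw [le_div_iff₀ (by linarith)]; linarith
    rw [Finset.sum_range_succ]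
    push_cast
    have e : β / (N + 1 + 1) - γ / (N + 1) = (β - γ) * (1 / ((N:ℝ) + 1))
        - β * (1 - 1 / ((N : ℝ) + 1 + 1)) + β * (1 - 1 / ((N : ℝ) + 1)) := by ring
    rw [mul_add]
    linarith

/-- `log (f / g) → ∞`: along the integers by divergence of the harmonic series, and between
consecutive integers because `H` varies slowly. -/
lemma tendsto_logExcess_diff (hf : BalancedEq β c f) (hg : BalancedEq γ d g) (hγβ : γ < β) :
    Tendsto (fun x => logExcess f x - logExcess g x) atTop atTop := by
  set E := ∫ t in Ioi (0:ℝ), exp (-t) * logWeight t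
  have h1 : Tendsto (fun N : ℕ => (β - γ) * ∑ i ∈ Finset.range N, 1 / ((i : ℝ) + 1)) atTop atTop :=
    tendsto_sum_range_one_div_nat_succ_atTop.const_mul_atTop (sub_pos.2 hγβ)
  refine Filter.tendsto_atTop.2 fun b => ?_
  obtain ⟨N₀, hN₀⟩ := eventually_atTop.1
    (h1.eventually_ge_atTop (b + 1 + 2 * E + β - (expMean f 1 - expMean g 1)))
  filter_upwards [eventually_ge_atTop ((N₀ : ℝ) + 1)] with x hx
  obtain ⟨N, hN⟩ : ∃ N, ⌊x⌋₊ = N + 1 :=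
    Nat.exists_eq_add_one.2 (Nat.floor_pos.2 (by
      have : (0:ℝ) ≤ N₀ := N₀.cast_nonneg
      linarith))
  have hx0 : 0 ≤ x := by
    have : (0:ℝ) ≤ N₀ := N₀.cast_nonneg
    linarith
  have h2 : (N:ℝ) + 1 ≤ x := by
    have := Nat.floor_le hx0
    rw [hN] at this; exact_mod_cast this
  have h3 : x < N + 1 + 1 := by
    have := Nat.lt_floor_add_one x
    rw [hN] at this; exact_mod_cast this
  have h4 : N₀ ≤ N := by
    have : (N₀ : ℝ) < N + 1 := by linarith
    have : N₀ < N + 1 := by exact_mod_cast this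
    omega
  have hA : (0:ℝ) < N + 1 := by positivity
  have h5 := hN₀ N h4
  have h6 := hf.le_expMean_diff hg N
  have h7 := abs_le.1 (hf.abs_expMean_sub_le hA)
  have h8 := abs_le.1 (hg.abs_expMean_sub_le hA)
  have h9 := hf.logExcess_mono hA h2
  have h10 := hg.logExcess_le hA h2
  have h11 : log x - log (N + 1) ≤ 1 := by
    rw [← log_div (hA.trans_le h2).ne' hA.ne']
    have h12 := log_le_sub_one_of_pos (div_pos (hA.trans_le h2) hA)
    have h13 : x / (N + 1) ≤ 2 := by
      rw [div_le_iff₀ hA]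
      have : (0:ℝ) ≤ N := N.cast_nonneg
      linarith
    linarith
  have h14 : β * (1 - 1 / ((N : ℝ) + 1)) ≤ β := by
    have : 0 < 1 / ((N : ℝ) + 1) := by positivity
    nlinarith [hf.nonneg]
  linarith [h7.2, h8.1]

lemma tendsto_div (hf : BalancedEq β c f) (hg : BalancedEq γ d g) (hγβ : γ < β) :
    Tendsto (fun x => g x / f x) atTop (𝓝 0) := by
  have h1 := tendsto_exp_neg_atTop_nhds_zero.comp (hf.tendsto_logExcess_diff hg hγβ)
  refine h1.congr' ?_
  filter_upwards [eventually_ge_atTop 0] with x hx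
  have h2 := hf.f_pos hx
  have h3 := hg.f_pos hx
  rw [← exp_log (div_pos h3 h2), log_div h3.ne' h2.ne']
  simp only [Function.comp, logExcess]
  congr 1; ring

end BalancedEq

/-! ### Comparison of the coefficients -/

namespace BalancedEq
open Filter Topology
variable {β : ℝ} {c : ℕ → ℝ} {f : ℝ → ℝ} {γ : ℝ} {d : ℕ → ℝ} {g : ℝ → ℝ}

lemma moment_succ (h : BalancedEq β c f) (n : ℕ) :
    ∫ x in Ioi (0:ℝ), x ^ (n + 1) / f x = 1 / c (n + 1) := by
  have h1 := h.moment (n + 1)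
  rw [if_neg (by omega)] at h1
  rw [eq_div_iff (h.pos _).ne', mul_comm, h1]

/-- `d n / c n = d n * ∫ x ^ n / f` is at most `1 / 2 + X d n X ^ n`, where `g / f ≤ 1 / 2` beyond
`X`: compare with `∫ x ^ n / g = 1 / d n` beyond `X` and use `f ≥ 1` below. -/
lemma eventually_coeff_lt (hf : BalancedEq β c f) (hg : BalancedEq γ d g) (hγβ : γ < β) :
    ∀ᶠ n in atTop, d (n + 1) / c (n + 1) < 1 := by
  obtain ⟨X₀, hX₀⟩ := eventually_atTop.1 ((hf.tendsto_div hg hγβ).eventually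
    (gt_mem_nhds (show (0:ℝ) < 1 / 2 by norm_num)))
  set X := max X₀ 1
  have hX1 : 0 < X := one_pos.trans_le (le_max_right _ _)
  have hlim : Tendsto (fun n => X * (d (n + 1) * X ^ (n + 1))) atTop (𝓝 (X * 0)) :=
    ((tendsto_add_atTop_iff_nat 1).2 (hg.summable hX1.le).tendsto_atTop_zero).const_mul X
  rw [mul_zero] at hlim
  filter_upwards [hlim.eventually (gt_mem_nhds (show (0:ℝ) < 1 / 2 by norm_num))] with n hn
  have i1 : IntegrableOn (fun x => (1 / 2) * (x ^ (n + 1) / g x)) (Ioi 0) :=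
    (hg.integrable_moment (n + 1)).const_mul _
  have i2 : IntegrableOn ((Ioc 0 X).indicator fun _ => X ^ (n + 1)) (Ioi 0) := by
    refine (IntegrableOn.integrable_indicator ?_ measurableSet_Ioc).integrableOn
    rw [integrableOn_const_iff]; simp
  have key : ∫ x in Ioi (0:ℝ), x ^ (n + 1) / f x ≤ (1 / 2) * (1 / d (n + 1)) + X * X ^ (n + 1) := by
    have e : (1 / 2) * (1 / d (n + 1)) + X * X ^ (n + 1) = ∫ x in Ioi (0:ℝ),
        ((1 / 2) * (x ^ (n + 1) / g x) + (Ioc 0 X).indicator (fun _ => X ^ (n + 1)) x) := by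
      rw [integral_add i1 i2, integral_const_mul, hg.moment_succ,
        setIntegral_indicator measurableSet_Ioc, inter_eq_right.2 Ioc_subset_Ioi_self]
      simp [hX1.le]
    rw [e]
    refine setIntegral_mono_on (hf.integrable_moment (n + 1)) (i1.add i2) measurableSet_Ioi
      fun x hx => ?_
    have hx0 : (0:ℝ) < x := hx
    have hfx := hf.f_pos hx0.le
    have hgx := hg.f_pos hx0.le
    have hp : 0 < x ^ (n + 1) := pow_pos hx0 _
    by_cases hxX : x ≤ X
    · rw [indicator_of_mem (show x ∈ Ioc 0 X from ⟨hx0, hxX⟩)]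
      have h1 : x ^ (n + 1) / f x ≤ X ^ (n + 1) :=
        (div_le_self hp.le (hf.one_le hx0.le)).trans (by gcongr)
      have h2 : 0 ≤ 1 / 2 * (x ^ (n + 1) / g x) := by positivity
      linarith
    · rw [indicator_of_notMem (fun h => hxX h.2), add_zero]
      have h1 := (hX₀ x ((le_max_left _ _).trans (not_le.1 hxX).le)).le
      rw [div_le_iff₀ hfx] at h1
      rw [← mul_div_assoc, div_le_div_iff₀ hfx hgx]
      nlinarith
  rw [hf.moment_succ] at key
  have hd := hg.pos (n + 1)
  calc d (n + 1) / c (n + 1) = d (n + 1) * (1 / c (n + 1)) := by ring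
    _ ≤ d (n + 1) * ((1 / 2) * (1 / d (n + 1)) + X * X ^ (n + 1)) := by gcongr
    _ = 1 / 2 + X * (d (n + 1) * X ^ (n + 1)) := by field_simp
    _ < 1 := by linarith

/-- Maximum principle for the ratio set `{d n / c n}`: if the maximum `M` over `n ≥ 1` were at
least `1`, then `g < M f` on `(0, ∞)`, and the moment identity would contradict maximality. -/
lemma coeff_lt (hf : BalancedEq β c f) (hg : BalancedEq γ d g) (hγβ : γ < β) (n : ℕ) :
    d (n + 1) < c (n + 1) := by
  set u : ℕ → ℝ := fun n => d (n + 1) / c (n + 1) with hu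
  by_contra! hcon
  have hn : 1 ≤ u n := (one_le_div (hf.pos _)).2 hcon
  have ev := hf.eventually_coeff_lt hg hγβ
  obtain ⟨k, hk⟩ := exists_max_of_eventually_le (a := u) (k₀ := n)
    (ev.mono fun j hj => hj.le.trans hn)
  have hM : 1 ≤ u k := hn.trans (hk n)
  have hle : ∀ j, d j ≤ u k * c j := fun j => by
    rcases j with _ | j
    · rw [hf.zero, hg.zero]; linarith
    · exact (div_le_iff₀ (hf.pos _)).1 (hk j)
  obtain ⟨j, hj⟩ := ev.exists
  have hlt : d (j + 1) < u k * c (j + 1) := (div_lt_iff₀ (hf.pos _)).1 (hj.trans_le hM)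
  have hgf : ∀ x, 0 < x → g x < u k * f x := fun x hx => by
    refine hasSum_lt (i := j + 1) (fun i => ?_) ?_ (hg.hasSum hx.le)
      ((hf.hasSum hx.le).mul_left (u k))
    · simpa [mul_assoc] using mul_le_mul_of_nonneg_right (hle i) (pow_pos hx i).le
    · simpa [mul_assoc] using mul_lt_mul_of_pos_right hlt (pow_pos hx (j + 1))
  have i1 := (hg.integrable_moment (k + 1)).const_mul (u k)
  have i2 := hf.integrable_moment (k + 1)
  have h1 := setIntegral_Ioi_pos (i1.sub i2) fun x hx => by
    have hfx := hf.f_pos hx.le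
    have hgx := hg.f_pos hx.le
    simp only [Pi.sub_apply]
    rw [sub_pos, ← mul_div_assoc, div_lt_div_iff₀ hfx hgx]
    have := mul_lt_mul_of_pos_left (hgf x hx) (pow_pos hx (k + 1))
    linarith
  have h2 := integral_sub i1 i2
  have h3 : ∫ x in Ioi (0:ℝ), ((fun x => u k * (x ^ (k + 1) / g x)) - fun x => x ^ (k + 1) / f x) x
      = 0 := by
    simp only [Pi.sub_apply]
    rw [h2, integral_const_mul, hg.moment_succ, hf.moment_succ]
    have := hg.pos (k + 1)
    have := hf.pos (k + 1)
    simp only [hu]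
    field_simp
    ring
  exact h1.ne' h3

end BalancedEq

theorem stmt19 (β γ : ℝ) (hγ : 0 ≤ γ) (hγβ : γ < β) (hβ : β < 1)
    (c cγ : ℕ → ℝ) (hc : ∀ n, 0 < c n) (hcγ : ∀ n, 0 < cγ n)
    (hc0 : c 0 = 1) (hcγ0 : cγ 0 = 1)
    (f g : ℝ → ℝ)
    (hf : ∀ x : ℝ, f x = ∑' n : ℕ, c n * x ^ n)
    (hg : ∀ x : ℝ, g x = ∑' n : ℕ, cγ n * x ^ n)
    (hbf : ∀ s ∈ Set.Ico (0:ℝ) 1,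
      (∫ x in Set.Ioi (0:ℝ), f (s * x) / f x) = 1 / (1 - s) - β)
    (hbg : ∀ s ∈ Set.Ico (0:ℝ) 1,
      (∫ x in Set.Ioi (0:ℝ), g (s * x) / g x) = 1 / (1 - s) - γ) :
    ∀ n : ℕ, 1 ≤ n → 1 / (n.factorial : ℝ) < c n ∧ cγ n < c n := by
  have Hf : BalancedEq β c f := ⟨hγ.trans hγβ.le, hβ, hc, hc0, hf, hbf⟩
  have Hg : BalancedEq γ cγ g := ⟨hγ, hγβ.trans hβ, hcγ, hcγ0, hg, hbg⟩
  intro n hn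
  obtain ⟨m, rfl⟩ := Nat.exists_eq_add_of_le' hn
  exact ⟨Hf.one_div_factorial_lt (hγ.trans_lt hγβ) m, Hf.coeff_lt Hg hγβ m⟩
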